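/- arXiv:1405.1795 — 3 statements merged into one kernel-verified Lean document; each statement's English description precedes it below -/
import Mathlib

section
/- Let b, c \ge 2 be integers and q a prime power, and let N := {X \in M(c,K) : there exists a monic irreducible polynomial f \in F[t] with f \ne t such that X_{bc,q} is f-primary cyclic and deg f > (1/2)\cdot dim_F(range((X_{bc,q})^{bc}))}, where the range is taken in K^c viewed as a bc-dimensional F-vector space. Then |N|/q^{bc^2} > \log 2 - (\log 2 + 3)/c - 2(1 - 1/c)/q^{b/2}, where q^{bc^2} = |M(c,K)| and q^{b/2} denotes the real square root of q^b. -/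
open Matrix Polynomial Module

/-- `Y` is `f`-primary cyclic: the multiplicity of the (monic irreducible) polynomial `f`
in the characteristic polynomial of `Y` equals its multiplicity in the minimal
polynomial of `Y`, and this multiplicity is at least 1. -/
def IsPrimaryCyclic {E V : Type*} [Field E] [AddCommGroup V] [Module E V]
    [FiniteDimensional E V] (Y : V →ₗ[E] V) (f : Polynomial E) : Prop :=
  0 < multiplicity f (LinearMap.charpoly Y) ∧
    multiplicity f (LinearMap.charpoly Y) = multiplicity f (minpoly E Y)

/-!
Let `V` be a `K`-space of dimension `c` and `L / K` an extension of degree `d`, where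
`c / 2 < d ≤ c`. An endomorphism `T` of `V` has an irreducible factor of `F`-degree `b * d` as soon
as some injective `K`-linear `φ : L → V` satisfies `T (φ x) = φ (α * x)` for a generator `α` of `L`
over `F`; as its degree exceeds half the dimension, the factor occurs only once and `T` is primary
cyclic for it. Count the triples `(T, α, φ)` twice. All but a proportion `2 / |K|` of the `α` are
generators and all but a proportion `2 / |K|` of the `φ` are injective, and each such pair extends
to `|End V| / |Hom(L, V)|` endomorphisms `T`. Conversely, by the dimension bound the images of any
two such embeddings for the same `T` share a nonzero vector, so `α` is one of the at most `d`
conjugates of a fixed element and `φ 1` lies in a fixed copy of `L`: each `T` occurs at most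
`d * |L|` times. Hence a proportion at least `(1 - 2 / |K|) ^ 2 / d` of all endomorphisms has such
a factor, these sets are disjoint for different `d`, and the sum of `1 / d` over `c / 2 < d ≤ c` is
at least `log 2 - 1 / c`.
-/

open scoped IntermediateField

section RealInequalities

theorem one_sub_sum_le_prod_one_sub {ι : Type*} (s : Finset ι) {f : ι → ℝ}
    (hf₀ : ∀ i ∈ s, 0 ≤ f i) (hf₁ : ∀ i ∈ s, f i ≤ 1) :
    1 - ∑ i ∈ s, f i ≤ ∏ i ∈ s, (1 - f i) := by
  induction s using Finset.cons_induction with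
  | empty => simp
  | cons a s ha ih =>
    simp only [Finset.forall_mem_cons] at hf₀ hf₁
    rw [Finset.sum_cons, Finset.prod_cons]
    have hsum : 0 ≤ ∑ i ∈ s, f i := Finset.sum_nonneg hf₀.2
    nlinarith [mul_le_mul_of_nonneg_left (ih hf₀.2 hf₁.2) (sub_nonneg.2 hf₁.1),
      mul_nonneg hf₀.1 hsum]

theorem mul_sum_range_pow_le_two_mul_pow {q : ℕ} (hq : 2 ≤ q) (n : ℕ) :
    q * ∑ k ∈ Finset.range n, q ^ k ≤ 2 * q ^ n := by
  induction n with
  | zero => simp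
  | succ n ih =>
    rw [Finset.sum_range_succ, mul_add, pow_succ']
    nlinarith [Nat.mul_le_mul_right (q ^ n) hq]

theorem log_sub_log_le_sum_Ico_inv {m n : ℕ} (h : m ≤ n) :
    Real.log (n + 1) - Real.log (m + 1) ≤ ∑ k ∈ Finset.Ico m n, 1 / ((k : ℝ) + 1) := by
  induction n, h using Nat.le_induction with
  | base => simp
  | succ n hmn ih =>
    have hstep : Real.log ((n : ℝ) + 1 + 1) - Real.log (n + 1) ≤ 1 / ((n : ℝ) + 1) := by
      rw [← Real.log_div (by positivity) (by positivity)]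
      refine (Real.log_le_sub_one_of_pos (by positivity)).trans_eq ?_
      field_simp
      ring
    rw [Finset.sum_Ico_succ_top hmn]
    push_cast
    linarith

theorem log_two_sub_le_sum_Ico_half_inv {n : ℕ} (hn : 0 < n) :
    Real.log 2 - 1 / n ≤ ∑ k ∈ Finset.Ico (n / 2) n, 1 / ((k : ℝ) + 1) := by
  have : (0 : ℝ) < n := by exact_mod_cast hn
  have hhalf : ((n / 2 : ℕ) : ℝ) + 1 ≤ (n + 2) / 2 := by
    have : ((n / 2 : ℕ) : ℝ) ≤ n / 2 := Nat.cast_div_le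
    linarith
  calc Real.log 2 - 1 / n ≤ Real.log 2 - 1 / (n + 1) := by gcongr; linarith
    _ = Real.log 2 + (1 - (((n : ℝ) + 1) / (n + 2))⁻¹) := by field_simp; ring
    _ ≤ Real.log 2 + Real.log (((n : ℝ) + 1) / (n + 2)) := by
      gcongr
      exact Real.one_sub_inv_le_log_of_pos (by positivity)
    _ = Real.log (n + 1) - Real.log ((n + 2) / 2) := by
      rw [Real.log_div (by positivity) (by positivity), Real.log_div (by positivity) (by simp)]
      ring
    _ ≤ Real.log (n + 1) - Real.log ((n / 2 : ℕ) + 1) := by gcongr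
    _ ≤ _ := log_sub_log_le_sum_Ico_inv (Nat.div_le_self n 2)

theorem bound_lt_log_two_sub_mul_sq {c Q : ℝ} (hc : 2 ≤ c) (hQ : 2 ≤ Q) :
    Real.log 2 - (Real.log 2 + 3) / c - 2 * (1 - 1 / c) / √Q <
      (Real.log 2 - 1 / c) * (1 - 2 / Q) ^ 2 := by
  obtain ⟨x, hx, rfl⟩ : ∃ x > 0, c = 1 / x := ⟨1 / c, by positivity, by simp⟩
  obtain ⟨u, hu, hQu⟩ : ∃ u > 0, √Q = 1 / u := ⟨1 / √Q, by positivity, by simp⟩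
  have hQu' : Q = 1 / u ^ 2 := by rw [← Real.sq_sqrt (by linarith : 0 ≤ Q), hQu]; ring
  have hx_le : x ≤ 1 / 2 := by rwa [le_one_div hx two_pos]
  have hu_sq : u ^ 2 ≤ 1 / 2 := by rwa [hQu', le_one_div two_pos (by positivity)] at hQ
  have hl := Real.log_two_lt_d9
  have hl' := Real.log_two_gt_d9
  have hu_lt : 2 * Real.log 2 * u < 1 := by nlinarith
  have hbernoulli : (Real.log 2 - x) * (1 - 4 * u ^ 2) ≤ (Real.log 2 - x) * (1 - 2 * u ^ 2) ^ 2 :=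
    mul_le_mul_of_nonneg_left (by nlinarith [sq_nonneg (u ^ 2)]) (by linarith)
  rw [hQu, hQu']
  simp only [div_div_eq_mul_div, div_one]
  nlinarith [mul_pos hx hu, mul_pos hu (sub_pos.2 hu_lt), mul_pos hx (pow_pos hu 2)]

end RealInequalities

theorem isPrimaryCyclic_of_dvd_minpoly {E V : Type*} [Field E] [AddCommGroup V] [Module E V]
    [FiniteDimensional E V] {T : Module.End E V} {f : E[X]} (hf : f ∣ minpoly E T)
    (hdeg : finrank E V < 2 * f.natDegree) : IsPrimaryCyclic T f := by
  have hdvd : minpoly E T ∣ T.charpoly := LinearMap.minpoly_dvd_charpoly T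
  have hsq : ¬ f ^ (1 + 1) ∣ T.charpoly := fun h => by
    have := natDegree_le_of_dvd h T.charpoly_monic.ne_zero
    rw [natDegree_pow, LinearMap.charpoly_natDegree] at this
    omega
  have hchar : multiplicity f T.charpoly = 1 :=
    multiplicity_eq_of_dvd_of_not_dvd (by simpa using hf.trans hdvd) hsq
  have hmin : multiplicity f (minpoly E T) = 1 :=
    multiplicity_eq_of_dvd_of_not_dvd (by simpa using hf) fun h => hsq (h.trans hdvd)
  exact ⟨by simp [hchar], hchar.trans hmin.symm⟩

theorem exists_aeval_eq_of_adjoin_eq_top {E L : Type*} [Field E] [Field L] [Algebra E L]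
    [FiniteDimensional E L] {α : L} (hα : E⟮α⟯ = ⊤) (z : L) : ∃ p : E[X], aeval α p = z := by
  have hz : z ∈ Algebra.adjoin E {α} := by
    rw [Algebra.adjoin_eq_top_of_primitive_element (Algebra.IsAlgebraic.isAlgebraic α) hα]
    trivial
  rwa [Algebra.adjoin_singleton_eq_range_aeval] at hz

theorem exists_ne_zero_apply_eq_apply {E V W W' : Type*} [Field E] [AddCommGroup V] [Module E V]
    [AddCommGroup W] [Module E W] [AddCommGroup W'] [Module E W'] [FiniteDimensional E V]
    [FiniteDimensional E W] [FiniteDimensional E W'] {φ : W →ₗ[E] V} (hφ : Function.Injective φ)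
    (φ' : W' →ₗ[E] V) (hdim : finrank E V < finrank E W + finrank E W') :
    ∃ x y, y ≠ 0 ∧ φ x = φ' y := by
  have hker : LinearMap.ker (φ.coprod (-φ')) ≠ ⊥ :=
    LinearMap.ker_ne_bot_of_finrank_lt (by rwa [finrank_prod])
  obtain ⟨⟨x, y⟩, hxy, hne⟩ := Submodule.exists_mem_ne_zero_of_ne_bot hker
  have heq : φ x = φ' y := by simpa [← sub_eq_add_neg, sub_eq_zero] using hxy
  refine ⟨x, y, fun hy => hne ?_, heq⟩
  rw [hy, map_zero, map_eq_zero_iff φ hφ] at heq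
  rw [heq, hy, Prod.mk_zero_zero]

/-- The linear map `φ` embeds the extension field `L` into `V` in such a way that `T` acts on the
image as multiplication by `α`; for `E = L` this says that `φ 1` is an eigenvector of `T` for `α`.
It replaces the factor `minpoly E α` of the characteristic polynomial of `T` by data that are easy
to count. -/
structure IsEigenembedding {E V L : Type*} [Field E] [AddCommGroup V] [Module E V] [Field L]
    [Algebra E L] (T : Module.End E V) (α : L) (φ : L →ₗ[E] V) : Prop where
  injective : Function.Injective φ
  comp_eq : T ∘ₗ φ = φ ∘ₗ LinearMap.mulLeft E α

namespace IsEigenembedding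

section Field

variable {E V L L' : Type*} [Field E] [AddCommGroup V] [Module E V]
  [Field L] [Algebra E L] [Field L'] [Algebra E L']
  {T : Module.End E V} {α : L} {φ : L →ₗ[E] V} {α' : L'} {φ' : L' →ₗ[E] V}

theorem aeval_apply (h : IsEigenembedding T α φ) (p : E[X]) (x : L) :
    aeval T p (φ x) = φ (aeval α p * x) := by
  have hT : ∀ y, T (φ y) = φ (α * y) := LinearMap.congr_fun h.comp_eq
  induction p using Polynomial.induction_on generalizing x with
  | C a => simp [← Algebra.smul_def]
  | add p q hp hq => simp [hp, hq, add_mul]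
  | monomial n a ih =>
    rw [pow_succ, ← mul_assoc, map_mul _ _ X, Module.End.mul_apply, aeval_X, hT, ih,
      map_mul _ _ X, aeval_X, mul_assoc]

theorem minpoly_dvd_minpoly (h : IsEigenembedding T α φ) : minpoly E α ∣ minpoly E T :=
  minpoly.dvd E α <| h.injective <| by simpa using (h.aeval_apply (minpoly E T) 1).symm

theorem isPrimaryCyclic [FiniteDimensional E V] [FiniteDimensional E L]
    (h : IsEigenembedding T α φ) (hα : E⟮α⟯ = ⊤) (hdim : finrank E V < 2 * finrank E L) :
    IsPrimaryCyclic T (minpoly E α) :=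
  isPrimaryCyclic_of_dvd_minpoly h.minpoly_dvd_minpoly <| by
    rwa [(Field.primitive_element_iff_minpoly_natDegree_eq E α).1 hα]

theorem eq_of_apply_one_eq [FiniteDimensional E L] {ψ : L →ₗ[E] V} (hφ : IsEigenembedding T α φ)
    (hψ : IsEigenembedding T α ψ) (hα : E⟮α⟯ = ⊤) (h : φ 1 = ψ 1) : φ = ψ := by
  ext z
  obtain ⟨p, rfl⟩ := exists_aeval_eq_of_adjoin_eq_top hα z
  have hp := congrArg (aeval T p) h
  rwa [hφ.aeval_apply, hψ.aeval_apply, mul_one] at hp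

variable [FiniteDimensional E V] [FiniteDimensional E L] [FiniteDimensional E L']

theorem minpoly_eq (h : IsEigenembedding T α φ) (h' : IsEigenembedding T α' φ')
    (hdim : finrank E V < finrank E L + finrank E L') : minpoly E α = minpoly E α' := by
  obtain ⟨x, y, hy, hxy⟩ := exists_ne_zero_apply_eq_apply h.injective φ' hdim
  have hroot : aeval α' (minpoly E α) = 0 := by
    have hp := h.aeval_apply (minpoly E α) x
    rw [minpoly.aeval, zero_mul, map_zero, hxy, h'.aeval_apply,
      map_eq_zero_iff φ' h'.injective] at hp
    exact (mul_eq_zero.1 hp).resolve_right hy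
  exact minpoly.eq_of_irreducible_of_monic (minpoly.irreducible (.of_finite E α)) hroot
    (minpoly.monic (.of_finite E α))

theorem apply_one_mem_range (h : IsEigenembedding T α φ) (h' : IsEigenembedding T α' φ')
    (hα' : E⟮α'⟯ = ⊤) (hdim : finrank E V < finrank E L + finrank E L') :
    φ' 1 ∈ LinearMap.range φ := by
  obtain ⟨x, y, hy, hxy⟩ := exists_ne_zero_apply_eq_apply h.injective φ' hdim
  obtain ⟨p, hp⟩ := exists_aeval_eq_of_adjoin_eq_top hα' y⁻¹
  refine ⟨aeval α p * x, ?_⟩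
  rw [← h.aeval_apply, hxy, h'.aeval_apply, hp, inv_mul_cancel₀ hy]

end Field

theorem restrictScalars {F K V L : Type*} [Field F] [Field K] [Algebra F K] [AddCommGroup V]
    [Module F V] [Module K V] [IsScalarTower F K V] [Field L] [Algebra F L] [Algebra K L]
    [IsScalarTower F K L] {T : Module.End K V} {α : L} {φ : L →ₗ[K] V}
    (h : IsEigenembedding T α φ) :
    IsEigenembedding (T.restrictScalars F) α (φ.restrictScalars F) :=
  ⟨h.injective, LinearMap.ext fun x => LinearMap.congr_fun h.comp_eq x⟩

end IsEigenembedding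

section Counting

theorem natCard_fiber_mul_natCard {A B : Type*} [AddGroup A] [AddGroup B] [Finite A] (f : A →+ B)
    (hf : Function.Surjective f) (b : B) :
    Nat.card {a // f a = b} * Nat.card B = Nat.card A := by
  obtain ⟨a₀, rfl⟩ := hf b
  have hfiber : Nat.card {a // f a = f a₀} = Nat.card f.ker :=
    Nat.card_congr <| (Equiv.subRight a₀).subtypeEquiv fun a => by
      simp [AddMonoidHom.mem_ker, sub_eq_zero]
  rw [hfiber, ← f.ker.card_mul_index, AddSubgroup.index_ker,
    AddMonoidHom.range_eq_top.2 hf, AddSubgroup.card_top]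

section LinearMap

variable {K V W : Type*} [Field K] [Finite K] [AddCommGroup V] [Module K V] [FiniteDimensional K V]
  [AddCommGroup W] [Module K W]

theorem natCard_comp_eq_mul_natCard {φ : W →ₗ[K] V} (hφ : Function.Injective φ) (ψ : W →ₗ[K] V) :
    Nat.card {T : Module.End K V // T ∘ₗ φ = ψ} * Nat.card (W →ₗ[K] V) =
      Nat.card (Module.End K V) := by
  have : Finite (Module.End K V) := Module.finite_of_finite K
  obtain ⟨ρ, hρ⟩ := φ.exists_leftInverse_of_injective (LinearMap.ker_eq_bot.2 hφ)
  refine natCard_fiber_mul_natCard (LinearMap.lcomp K V φ).toAddMonoidHom (fun ψ => ?_) ψ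
  exact ⟨ψ ∘ₗ ρ, by simp [LinearMap.lcomp_apply', LinearMap.comp_assoc, hρ]⟩

variable [FiniteDimensional K W]

theorem natCard_injective_linearMap (h : finrank K W ≤ finrank K V) :
    Nat.card {φ : W →ₗ[K] V // Function.Injective φ} =
      ∏ i : Fin (finrank K W), (Nat.card K ^ finrank K V - Nat.card K ^ i.val) := by
  have : Fintype K := .ofFinite K
  have : Finite V := Module.finite_of_finite K
  rw [Nat.card_eq_fintype_card (α := K), ← card_linearIndependent h]
  let b := finBasis K W
  refine Nat.card_congr <| ((b.constr K).symm.toEquiv).subtypeEquiv fun φ => ?_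
  rw [← LinearMap.ker_eq_bot]
  exact ⟨fun hφ => b.linearIndependent.map' φ hφ, fun hφ => LinearMap.ker_eq_bot.2 <|
    LinearMap.injective_of_linearIndependent b.span_eq hφ⟩

theorem one_sub_mul_natCard_le_natCard_injective (h : finrank K W ≤ finrank K V) :
    (1 - 2 / (Nat.card K : ℝ)) * Nat.card (W →ₗ[K] V) ≤
      Nat.card {φ : W →ₗ[K] V // Function.Injective φ} := by
  set Q := Nat.card K
  set c := finrank K V
  set d := finrank K W
  have hQ : 2 ≤ Q := Finite.one_lt_card
  have hQ₀ : (0 : ℝ) < Q := by positivity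
  have hsum : ∑ i : Fin d, (Q : ℝ) ^ i.val / Q ^ c ≤ 2 / Q := by
    rw [Fin.sum_univ_eq_sum_range (fun i => (Q : ℝ) ^ i / Q ^ c), ← Finset.sum_div,
      div_le_div_iff₀ (by positivity) hQ₀, mul_comm]
    exact_mod_cast (mul_sum_range_pow_le_two_mul_pow hQ d).trans (by gcongr; omega)
  have hfactor (i : Fin d) : ((Q ^ c - Q ^ i.val : ℕ) : ℝ) = Q ^ c * (1 - Q ^ i.val / Q ^ c) := by
    rw [Nat.cast_sub (Nat.pow_le_pow_right (by omega) (by omega))]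
    push_cast
    field_simp
  have hcard : Nat.card (W →ₗ[K] V) = (Q ^ c) ^ d := by
    rw [Module.natCard_eq_pow_finrank (K := K), finrank_linearMap, mul_comm, pow_mul]
  rw [natCard_injective_linearMap h, Nat.cast_prod, Finset.prod_congr rfl fun i _ => hfactor i,
    Finset.prod_mul_distrib, Finset.prod_const, Finset.card_univ, Fintype.card_fin, hcard, mul_comm]
  push_cast
  gcongr
  refine le_trans (by linarith) (one_sub_sum_le_prod_one_sub Finset.univ
    (fun i _ => by positivity) fun i _ => ?_)
  rw [div_le_one (by positivity)]
  exact pow_le_pow_right₀ (by exact_mod_cast (by omega : 1 ≤ Q)) (by omega)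

end LinearMap

section PrimitiveElement

variable {F L : Type*} [Field F] [Field L] [Algebra F L] [FiniteDimensional F L]

theorem natDegree_minpoly_le_half_finrank {α : L} (hα : F⟮α⟯ ≠ ⊤) :
    (minpoly F α).natDegree ≤ finrank F L / 2 := by
  have hne : (minpoly F α).natDegree ≠ finrank F L :=
    mt (Field.primitive_element_iff_minpoly_natDegree_eq F α).2 hα
  obtain ⟨k, hk⟩ := minpoly.degree_dvd (K := F) (.of_finite F α)
  have hk₀ : k ≠ 0 := by rintro rfl; exact finrank_pos.ne' (hk.trans (mul_zero _))
  have hk₁ : k ≠ 1 := by rintro rfl; exact hne (by simpa using hk.symm)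
  rw [Nat.le_div_iff_mul_le two_pos, hk]
  exact Nat.mul_le_mul_left _ (by omega)

variable [Finite F]

theorem pow_natCard_pow_natDegree_minpoly (α : L) :
    α ^ Nat.card F ^ (minpoly F α).natDegree = α := by
  have : Finite F⟮α⟯ := Module.finite_of_finite F
  have : Fintype F⟮α⟯ := .ofFinite _
  have h := FiniteField.pow_card (IntermediateField.AdjoinSimple.gen F α)
  rw [← Nat.card_eq_fintype_card, Module.natCard_eq_pow_finrank (K := F),
    IntermediateField.adjoin.finrank (.of_finite F α)] at h
  exact congrArg Subtype.val h

theorem natCard_not_primitive_le :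
    Nat.card {α : L // F⟮α⟯ ≠ ⊤} ≤ 2 * Nat.card F ^ (finrank F L / 2) := by
  classical
  have : Finite L := Module.finite_of_finite F
  have : Fintype L := .ofFinite L
  set q := Nat.card F
  have hq : 1 < q := Finite.one_lt_card
  let roots (k : ℕ) : Finset L := (X ^ q ^ (k + 1) - X : L[X]).roots.toFinset
  have hroots (k : ℕ) : (roots k).card ≤ q ^ (k + 1) := by
    rw [← FiniteField.X_pow_card_pow_sub_X_natDegree_eq L k.succ_ne_zero hq]
    exact (Multiset.toFinset_card_le _).trans (card_roots' _)
  have hsub : (Finset.univ.filter fun α : L => F⟮α⟯ ≠ ⊤) ⊆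
      (Finset.range (finrank F L / 2)).biUnion roots := fun α hα => by
    have hle := natDegree_minpoly_le_half_finrank (Finset.mem_filter.1 hα).2
    have hpos : 0 < (minpoly F α).natDegree := minpoly.natDegree_pos (.of_finite F α)
    obtain ⟨k, hk⟩ := Nat.exists_eq_add_of_le' hpos
    refine Finset.mem_biUnion.2 ⟨k, Finset.mem_range.2 (by omega), ?_⟩
    rw [Multiset.mem_toFinset,
      mem_roots (FiniteField.X_pow_card_pow_sub_X_ne_zero L k.succ_ne_zero hq)]
    simp [← hk, q, pow_natCard_pow_natDegree_minpoly]
  calc Nat.card {α : L // F⟮α⟯ ≠ ⊤}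
      = (Finset.univ.filter fun α : L => F⟮α⟯ ≠ ⊤).card := by
        rw [Nat.card_eq_fintype_card, Fintype.card_subtype]
    _ ≤ ∑ k ∈ Finset.range (finrank F L / 2), (roots k).card :=
        (Finset.card_le_card hsub).trans Finset.card_biUnion_le
    _ ≤ ∑ k ∈ Finset.range (finrank F L / 2), q ^ (k + 1) := Finset.sum_le_sum fun k _ => hroots k
    _ = q * ∑ k ∈ Finset.range (finrank F L / 2), q ^ k := by simp only [pow_succ', Finset.mul_sum]
    _ ≤ 2 * q ^ (finrank F L / 2) := mul_sum_range_pow_le_two_mul_pow hq _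

theorem one_sub_mul_natCard_le_natCard_primitive {K : Type*} [Field K] [Algebra F K] [Algebra K L]
    [IsScalarTower F K L] (h : 2 ≤ finrank K L) :
    (1 - 2 / (Nat.card K : ℝ)) * Nat.card L ≤ Nat.card {α : L // F⟮α⟯ = ⊤} := by
  have : FiniteDimensional F K := .left F K L
  have : Finite L := Module.finite_of_finite F
  have : Finite K := Module.finite_of_finite F
  have hK : Nat.card K = Nat.card F ^ finrank F K := Module.natCard_eq_pow_finrank
  have hexp : finrank F L / 2 + finrank F K ≤ finrank F L := by
    rw [← finrank_mul_finrank F K L]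
    have := Nat.mul_le_mul_left (finrank F K) h
    omega
  have hpow : Nat.card F ^ (finrank F L / 2) * Nat.card K ≤ Nat.card L := by
    rw [hK, ← pow_add, Module.natCard_eq_pow_finrank (K := F) (V := L)]
    exact Nat.pow_le_pow_right Nat.card_pos hexp
  have hsplit : Nat.card {α : L // F⟮α⟯ = ⊤} + Nat.card {α : L // F⟮α⟯ ≠ ⊤} = Nat.card L := by
    classical
    rw [← Nat.card_sum, Nat.card_congr (Equiv.sumCompl _)]
  have hK₀ : (0 : ℝ) < Nat.card K := by exact_mod_cast Nat.card_pos
  have hnot : (Nat.card {α : L // F⟮α⟯ ≠ ⊤} : ℝ) ≤ 2 * (Nat.card L / Nat.card K) := by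
    refine (by exact_mod_cast natCard_not_primitive_le :
      (_ : ℝ) ≤ 2 * (Nat.card F : ℝ) ^ (finrank F L / 2)).trans ?_
    gcongr
    rw [le_div_iff₀ hK₀]
    exact_mod_cast hpow
  have hsplit' : (Nat.card {α : L // F⟮α⟯ = ⊤} : ℝ) + Nat.card {α : L // F⟮α⟯ ≠ ⊤} = Nat.card L :=
    by exact_mod_cast hsplit
  calc (1 - 2 / (Nat.card K : ℝ)) * Nat.card L = Nat.card L - 2 * (Nat.card L / Nat.card K) := by
        ring
    _ ≤ _ := by linarith

end PrimitiveElement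

end Counting

section DoubleCounting

theorem ncard_mul_le_ncard_mul {A B : Type*} [Finite A] [Finite B] (r : A → B → Prop) {s : Set A}
    {t : Set B} {m n : ℝ} (hm : ∀ a ∈ s, m ≤ {b ∈ t | r a b}.ncard)
    (hn : ∀ b ∈ t, {a ∈ s | r a b}.ncard ≤ n) : s.ncard * m ≤ t.ncard * n := by
  classical
  lift s to Finset A using s.toFinite
  lift t to Finset B using t.toFinite
  simp only [Finset.mem_coe, ← Finset.coe_filter, Set.ncard_coe_finset] at *
  simpa only [nsmul_eq_mul] using Finset.card_nsmul_le_card_nsmul r hm hn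

variable {K L V : Type*} [Field K] [Finite K] [Field L] [Algebra K L] [FiniteDimensional K L]
  [AddCommGroup V] [Module K V] [FiniteDimensional K V]

theorem IsEigenembedding.ncard_le {T : Module.End K V} {α : L} {φ : L →ₗ[K] V}
    (h : IsEigenembedding T α φ) (hdim : finrank K V < 2 * finrank K L) :
    {p : L × (L →ₗ[K] V) | K⟮p.1⟯ = ⊤ ∧ IsEigenembedding T p.1 p.2}.ncard ≤
      finrank K L * Nat.card L := by
  have : Finite L := Module.finite_of_finite K
  rw [two_mul] at hdim
  have hmaps : ∀ p ∈ {p : L × (L →ₗ[K] V) | K⟮p.1⟯ = ⊤ ∧ IsEigenembedding T p.1 p.2},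
      (p.1, p.2 1) ∈ (minpoly K α).rootSet L ×ˢ Set.range φ := fun p hp =>
    ⟨(mem_rootSet_of_ne (minpoly.ne_zero (.of_finite K α))).2 <| by
      rw [h.minpoly_eq hp.2 hdim, minpoly.aeval], h.apply_one_mem_range hp.2 hp.1 hdim⟩
  have hinj : Set.InjOn (fun p : L × (L →ₗ[K] V) => (p.1, p.2 1))
      {p | K⟮p.1⟯ = ⊤ ∧ IsEigenembedding T p.1 p.2} := by
    rintro ⟨β, ψ⟩ hψ ⟨γ, χ⟩ hχ heq
    obtain ⟨rfl, hone⟩ := Prod.mk.inj heq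
    exact Prod.ext rfl (hψ.2.eq_of_apply_one_eq hχ.2 hψ.1 hone)
  calc _ ≤ ((minpoly K α).rootSet L ×ˢ Set.range φ).ncard :=
        Set.ncard_le_ncard_of_injOn _ hmaps hinj (((minpoly K α).rootSet_finite L).prod
          (Set.finite_range φ))
    _ = ((minpoly K α).rootSet L).ncard * Nat.card L := by
      rw [Set.ncard_prod, Set.ncard_range_of_injective h.injective]
    _ ≤ finrank K L * Nat.card L := by
      grw [ncard_rootSet_le, minpoly.natDegree_le]

variable (F : Type*) [Field F] [Algebra F K] [Algebra F L] [IsScalarTower F K L]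

variable (K L V) in
/-- The `K`-linear endomorphisms of `V` with an eigenembedding of `L` whose eigenvalue generates
`L` over the base field `F`. -/
def primitiveEigenEnd : Set (Module.End K V) :=
  {T | ∃ (α : L) (φ : L →ₗ[K] V), F⟮α⟯ = ⊤ ∧ IsEigenembedding T α φ}

theorem natCard_mul_natCard_mul_le_ncard_primitiveEigenEnd_mul
    (hdim : finrank K V < 2 * finrank K L) :
    (Nat.card {α : L // F⟮α⟯ = ⊤} * Nat.card {φ : L →ₗ[K] V // Function.Injective φ} : ℝ) *
        (Nat.card (Module.End K V) / Nat.card (L →ₗ[K] V)) ≤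
      (primitiveEigenEnd K L V F).ncard * (finrank K L * Nat.card L) := by
  have : Finite L := Module.finite_of_finite K
  have : Finite (L →ₗ[K] V) := Module.finite_of_finite K
  have : Finite (Module.End K V) := Module.finite_of_finite K
  let pairs : Set (L × (L →ₗ[K] V)) :=
    {α : L | F⟮α⟯ = ⊤} ×ˢ {φ : L →ₗ[K] V | Function.Injective φ}
  have habove : ∀ p ∈ pairs, (Nat.card (Module.End K V) / Nat.card (L →ₗ[K] V) : ℝ) ≤
      {T ∈ primitiveEigenEnd K L V F | IsEigenembedding T p.1 p.2}.ncard := by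
    rintro ⟨α, φ⟩ ⟨hα, hφ⟩
    rw [div_le_iff₀ (by exact_mod_cast Nat.card_pos),
      ← natCard_comp_eq_mul_natCard hφ (φ ∘ₗ LinearMap.mulLeft K α), Nat.cast_mul]
    gcongr
    exact Set.ncard_le_ncard fun T hT => ⟨⟨α, φ, hα, hφ, hT⟩, hφ, hT⟩
  have hbelow : ∀ T ∈ primitiveEigenEnd K L V F,
      ({p ∈ pairs | IsEigenembedding T p.1 p.2}.ncard : ℝ) ≤ finrank K L * Nat.card L := by
    rintro T ⟨α, φ, -, h⟩
    have hsub : {p ∈ pairs | IsEigenembedding T p.1 p.2} ⊆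
        {p | K⟮p.1⟯ = ⊤ ∧ IsEigenembedding T p.1 p.2} := fun p hp =>
      ⟨IntermediateField.adjoin_eq_top_of_adjoin_eq_top F hp.1.1, hp.2⟩
    exact_mod_cast (Set.ncard_le_ncard hsub).trans (h.ncard_le hdim)
  have hpairs : pairs.ncard = Nat.card {α : L // F⟮α⟯ = ⊤} *
      Nat.card {φ : L →ₗ[K] V // Function.Injective φ} := Set.ncard_prod
  rw [← Nat.cast_mul, ← hpairs]
  exact ncard_mul_le_ncard_mul _ habove hbelow

theorem one_sub_sq_div_mul_natCard_le_ncard_primitiveEigenEnd (hL : 2 ≤ finrank K L)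
    (hLV : finrank K L ≤ finrank K V) (hVL : finrank K V < 2 * finrank K L) :
    (1 - 2 / (Nat.card K : ℝ)) ^ 2 / finrank K L * Nat.card (Module.End K V) ≤
      (primitiveEigenEnd K L V F).ncard := by
  have : Finite F := .of_injective _ (algebraMap F K).injective
  have : Finite L := Module.finite_of_finite K
  have : Finite (L →ₗ[K] V) := Module.finite_of_finite K
  have hprim := one_sub_mul_natCard_le_natCard_primitive (F := F) hL
  have hinj := one_sub_mul_natCard_le_natCard_injective hLV
  have hcount := natCard_mul_natCard_mul_le_ncard_primitiveEigenEnd_mul (V := V) F hVL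
  have hQ : 0 ≤ 1 - 2 / (Nat.card K : ℝ) := by
    have : (2 : ℝ) ≤ Nat.card K := by exact_mod_cast Finite.one_lt_card
    rw [sub_nonneg]
    exact (div_le_one (by linarith)).2 this
  have hL₀ : (0 : ℝ) < Nat.card L := by exact_mod_cast Nat.card_pos
  have hHom₀ : (0 : ℝ) < Nat.card (L →ₗ[K] V) := by exact_mod_cast Nat.card_pos
  rw [div_mul_eq_mul_div, div_le_iff₀ (by positivity)]
  refine le_of_mul_le_mul_right ?_ hL₀
  calc (1 - 2 / (Nat.card K : ℝ)) ^ 2 * Nat.card (Module.End K V) * Nat.card L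
      = (1 - 2 / (Nat.card K : ℝ)) * Nat.card L *
          ((1 - 2 / (Nat.card K : ℝ)) * Nat.card (L →ₗ[K] V)) *
          (Nat.card (Module.End K V) / Nat.card (L →ₗ[K] V)) := by field_simp
    _ ≤ _ := by gcongr
    _ ≤ _ := hcount.trans_eq (mul_assoc _ _ _).symm

end DoubleCounting

section PrimaryCyclic

variable (F K V : Type*) [Field F] [Field K] [Algebra F K] [AddCommGroup V] [Module F V]
  [Module K V] [IsScalarTower F K V] [FiniteDimensional F V]

/-- The `K`-linear endomorphisms of `V` that, viewed over the subfield `F`, are `f`-primary cyclic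
for some monic irreducible `f` of degree `n`. -/
def primaryCyclicOfDegree (n : ℕ) : Set (Module.End K V) :=
  {T | ∃ f : F[X], f.Monic ∧ Irreducible f ∧ f.natDegree = n ∧
    IsPrimaryCyclic (T.restrictScalars F) f}

theorem disjoint_primaryCyclicOfDegree {m n : ℕ} (hne : m ≠ n) (hdim : finrank F V < m + n) :
    Disjoint (primaryCyclicOfDegree F K V m) (primaryCyclicOfDegree F K V n) := by
  rw [Set.disjoint_left]
  rintro T ⟨f, hf, hfirr, rfl, hTf⟩ ⟨g, hg, hgirr, rfl, hTg⟩
  have hcop : IsCoprime f g := hfirr.coprime_iff_not_dvd.2 fun hdvd =>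
    hne <| congrArg natDegree <| eq_of_monic_of_associated hf hg <|
      (hfirr.dvd_irreducible_iff_associated hgirr).1 hdvd
  have hmul : f * g ∣ (T.restrictScalars F).charpoly :=
    hcop.mul_dvd (dvd_of_multiplicity_pos hTf.1) (dvd_of_multiplicity_pos hTg.1)
  have hdeg := natDegree_le_of_dvd hmul (LinearMap.charpoly_monic _).ne_zero
  rw [hf.natDegree_mul hg, LinearMap.charpoly_natDegree] at hdeg
  omega

variable {V} in
theorem primitiveEigenEnd_subset_primaryCyclicOfDegree {L : Type*} [Field L] [Algebra F L]
    [Algebra K L] [IsScalarTower F K L] [FiniteDimensional F L]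
    (hdim : finrank F V < 2 * finrank F L) :
    primitiveEigenEnd K L V F ⊆ primaryCyclicOfDegree F K V (finrank F L) := by
  rintro T ⟨α, φ, hα, h⟩
  exact ⟨minpoly F α, minpoly.monic (.of_finite F α), minpoly.irreducible (.of_finite F α),
    (Field.primitive_element_iff_minpoly_natDegree_eq F α).1 hα,
    h.restrictScalars.isPrimaryCyclic hα hdim⟩

variable [FiniteDimensional F K]

variable {F K V} in
theorem exists_ne_X_of_mem_iUnion_primaryCyclicOfDegree (hV : 2 ≤ finrank K V)
    {T : Module.End K V}
    (hT : T ∈ ⋃ k ∈ Finset.Ico (finrank K V / 2) (finrank K V),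
      primaryCyclicOfDegree F K V (finrank F K * (k + 1))) (m : ℕ) :
    ∃ f : F[X], f.Monic ∧ Irreducible f ∧ f ≠ X ∧ IsPrimaryCyclic (T.restrictScalars F) f ∧
      finrank F (LinearMap.range (T.restrictScalars F ^ m)) < 2 * f.natDegree := by
  simp only [Set.mem_iUnion, Finset.mem_Ico] at hT
  obtain ⟨k, hk, f, hf, hfirr, hdeg, hTf⟩ := hT
  have hdim : finrank F V < 2 * f.natDegree := by
    rw [hdeg, ← finrank_mul_finrank F K V, mul_left_comm]
    exact Nat.mul_lt_mul_of_pos_left (by omega) finrank_pos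
  refine ⟨f, hf, hfirr, ?_, hTf, (Submodule.finrank_le _).trans_lt hdim⟩
  rintro rfl
  rw [natDegree_X] at hdeg
  have := Nat.eq_one_of_mul_eq_one_left hdeg.symm
  omega

variable [Finite F]

theorem one_sub_sq_div_mul_natCard_le_ncard_primaryCyclicOfDegree {d : ℕ}
    (hd : 2 ≤ d) (hdV : d ≤ finrank K V) (hVd : finrank K V < 2 * d) :
    (1 - 2 / (Nat.card K : ℝ)) ^ 2 / d * Nat.card (Module.End K V) ≤
      (primaryCyclicOfDegree F K V (finrank F K * d)).ncard := by
  have : FiniteDimensional K V := .right F K V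
  have : Finite K := Module.finite_of_finite F
  have : Finite (Module.End K V) := Module.finite_of_finite K
  obtain ⟨p, hp⟩ := CharP.exists K
  have : Fact p.Prime := ⟨CharP.char_is_prime K p⟩
  have : NeZero d := ⟨by omega⟩
  let L := FiniteField.Extension K p d
  let : Algebra F L := ((algebraMap K L).comp (algebraMap F K)).toAlgebra
  have : IsScalarTower F K L := .of_algebraMap_eq' rfl
  have : FiniteDimensional F L := .trans F K L
  have hL : finrank K L = d := FiniteField.finrank_extension K p d
  have hsub := primitiveEigenEnd_subset_primaryCyclicOfDegree F K (V := V) (L := L) <| by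
    rw [← finrank_mul_finrank F K V, ← finrank_mul_finrank F K L, hL, mul_left_comm]
    exact Nat.mul_lt_mul_of_pos_left hVd finrank_pos
  have hcount := one_sub_sq_div_mul_natCard_le_ncard_primitiveEigenEnd (L := L) (V := V) F
    (by rwa [hL]) (by rwa [hL]) (by rwa [hL])
  rw [← finrank_mul_finrank F K L, hL] at hsub
  rw [hL] at hcount
  exact hcount.trans (by exact_mod_cast Set.ncard_le_ncard hsub)

theorem log_two_sub_mul_natCard_le_ncard_iUnion_primaryCyclicOfDegree
    (hV : 2 ≤ finrank K V) :
    (Real.log 2 - 1 / finrank K V) * (1 - 2 / (Nat.card K : ℝ)) ^ 2 * Nat.card (Module.End K V) ≤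
      (⋃ k ∈ Finset.Ico (finrank K V / 2) (finrank K V),
        primaryCyclicOfDegree F K V (finrank F K * (k + 1))).ncard := by
  have : FiniteDimensional K V := .right F K V
  have : Finite K := Module.finite_of_finite F
  have : Finite (Module.End K V) := Module.finite_of_finite K
  set c := finrank K V
  set Q : ℝ := (Nat.card K : ℝ)
  set E : ℝ := (Nat.card (Module.End K V) : ℝ)
  have hdisj : (Finset.Ico (c / 2) c : Set ℕ).PairwiseDisjoint fun k =>
      primaryCyclicOfDegree F K V (finrank F K * (k + 1)) := by
    intro k hk l hl hkl
    rw [Finset.mem_coe, Finset.mem_Ico] at hk hl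
    refine disjoint_primaryCyclicOfDegree F K V
      (mt (Nat.eq_of_mul_eq_mul_left finrank_pos) (by omega)) ?_
    rw [← finrank_mul_finrank F K V, ← mul_add]
    exact Nat.mul_lt_mul_of_pos_left (by omega) finrank_pos
  have hdegree : ∀ k ∈ Finset.Ico (c / 2) c, (1 - 2 / Q) ^ 2 / ((k : ℝ) + 1) * E ≤
      (primaryCyclicOfDegree F K V (finrank F K * (k + 1))).ncard := fun k hk => by
    rw [Finset.mem_Ico] at hk
    exact_mod_cast one_sub_sq_div_mul_natCard_le_ncard_primaryCyclicOfDegree F K V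
      (d := k + 1) (by omega) (by omega) (by omega)
  calc (Real.log 2 - 1 / c) * (1 - 2 / Q) ^ 2 * E
      ≤ (∑ k ∈ Finset.Ico (c / 2) c, 1 / ((k : ℝ) + 1)) * (1 - 2 / Q) ^ 2 * E := by
        gcongr
        exact log_two_sub_le_sum_Ico_half_inv (by omega)
    _ = ∑ k ∈ Finset.Ico (c / 2) c, (1 - 2 / Q) ^ 2 / ((k : ℝ) + 1) * E := by
        simp only [Finset.sum_mul, one_div_mul_eq_div]
    _ ≤ _ := by
        have hunion := (Finset.finite_toSet _).ncard_biUnion (fun _ _ => Set.toFinite _) hdisj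
        rw [finsum_mem_coe_finset] at hunion
        simp only [Finset.mem_coe] at hunion
        rw [hunion, Nat.cast_sum]
        exact Finset.sum_le_sum hdegree

end PrimaryCyclic

theorem stmt9_general (q b c : ℕ) (hc : 2 ≤ c)
    (F K : Type*) [Field F] [Fintype F] (hF : Fintype.card F = q)
    [Field K] [Algebra F K] [FiniteDimensional F K] (hK : Module.finrank F K = b)
    (N : Set (Matrix (Fin c) (Fin c) K))
    (hN : N = {A : Matrix (Fin c) (Fin c) K | ∃ f : Polynomial F,
      f.Monic ∧ Irreducible f ∧ f ≠ Polynomial.X ∧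
      IsPrimaryCyclic ((A.mulVecLin).restrictScalars F) f ∧
      Module.finrank F
          (LinearMap.range (((A.mulVecLin).restrictScalars F) ^ (b * c))) <
        2 * f.natDegree}) :
    Real.log 2 - (Real.log 2 + 3) / (c : ℝ) - 2 * (1 - 1 / (c : ℝ)) / Real.sqrt ((q : ℝ) ^ b) <
      (Nat.card N : ℝ) / (q : ℝ) ^ (b * c ^ 2) := by
  have : Finite K := Module.finite_of_finite F
  have hcard : Nat.card K = q ^ b := by
    rw [Module.natCard_eq_pow_finrank (K := F), Nat.card_eq_fintype_card, hF, hK]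
  have hEnd : Nat.card (Module.End K (Fin c → K)) = q ^ (b * c ^ 2) := by
    rw [Module.natCard_eq_pow_finrank (K := K), finrank_linearMap, finrank_fin_fun, hcard,
      ← pow_mul, sq]
  have hQ : (2 : ℝ) ≤ (q : ℝ) ^ b := by
    exact_mod_cast hcard ▸ (Finite.one_lt_card : 1 < Nat.card K)
  have hmaps : ∀ T ∈ ⋃ k ∈ Finset.Ico (c / 2) c,
      primaryCyclicOfDegree F K (Fin c → K) (finrank F K * (k + 1)), LinearMap.toMatrix' T ∈ N := by
    intro T hT
    rw [hN, Set.mem_ofPred_eq, ← Matrix.toLin'_apply', Matrix.toLin'_toMatrix']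
    exact exists_ne_X_of_mem_iUnion_primaryCyclicOfDegree (by simpa) (by simpa using hT) _
  have hN_card := Set.ncard_le_ncard_of_injOn _ hmaps LinearMap.toMatrix'.injective.injOn
  have hbound := log_two_sub_mul_natCard_le_ncard_iUnion_primaryCyclicOfDegree F K (Fin c → K)
    (by rwa [finrank_fin_fun])
  rw [finrank_fin_fun, hcard, hEnd] at hbound
  push_cast at hbound
  have hq : (0 : ℝ) < q := by exact_mod_cast hF ▸ Fintype.card_pos
  rw [Nat.card_coe_set_eq]
  calc _ < (Real.log 2 - 1 / c) * (1 - 2 / (q : ℝ) ^ b) ^ 2 :=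
        bound_lt_log_two_sub_mul_sq (by exact_mod_cast hc) hQ
    _ ≤ _ := by
      rw [le_div_iff₀ (by positivity)]
      exact hbound.trans (by exact_mod_cast hN_card)

theorem stmt9 (q b c : ℕ) (hq : IsPrimePow q) (hb : 2 ≤ b) (hc : 2 ≤ c)
    (F K : Type*) [Field F] [Fintype F] (hF : Fintype.card F = q)
    [Field K] [Algebra F K] [FiniteDimensional F K] (hK : Module.finrank F K = b)
    (N : Set (Matrix (Fin c) (Fin c) K))
    (hN : N = {A : Matrix (Fin c) (Fin c) K | ∃ f : Polynomial F,
      f.Monic ∧ Irreducible f ∧ f ≠ Polynomial.X ∧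
      IsPrimaryCyclic ((A.mulVecLin).restrictScalars F) f ∧
      Module.finrank F
          (LinearMap.range (((A.mulVecLin).restrictScalars F) ^ (b * c))) <
        2 * f.natDegree}) :
    Real.log 2 - (Real.log 2 + 3) / (c : ℝ) - 2 * (1 - 1 / (c : ℝ)) / Real.sqrt ((q : ℝ) ^ b) <
      (Nat.card N : ℝ) / (q : ℝ) ^ (b * c ^ 2) :=
  stmt9_general q b c hc F K hF hK N hN
end

section
/- Let f \in F[t] be monic irreducible and X \in M(c,K) be such that f divides charpoly_F(X). Then X_{bc,q} is f-primary cyclic if and only if b divides deg(f) and there exists a monic irreducible g \in K[t] of degree deg(f)/b dividing the image of f in K[t] such that: (i) X_{c,q^b} is g-primary cyclic, and (ii) for every nontrivial \tau \in Gal(K/F), g^{\tau} \ne g and g^{\tau} does not divide charpoly_K(X). -/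
open Matrix Polynomial Module

/-!
Over `K` the polynomial `f` is, up to a unit, the product of the distinct Galois conjugates of any
one of its irreducible factors `g`, and the characteristic polynomial of `Y` over `F` is the product
of the conjugates of its characteristic polynomial over `K`. Writing `m_h(p)` for the multiplicity
of `h` in `p`, and `χ`, `μ` for characteristic and minimal polynomials, this gives

  `∑ σ, m_{σ g}(χ_K) = m_f(χ_F)` and `m_f(μ_F) = max_{h ∣ f} m_h(μ_K)`.

So `m_f(χ_F) = m_f(μ_F)` forces, for the factor `g` attaining the maximum, that every inequality
in `m_f(μ_F) = m_g(μ_K) ≤ m_g(χ_K) ≤ ∑ σ, m_{σ g}(χ_K)` is an equality: no `σ g` with `σ ≠ 1`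
divides `χ_K`, hence `g` has `[K : F]` distinct conjugates. Conversely, if no such `σ g`
divides `χ_K` and `Y` is `g`-primary cyclic, then `m_f(χ_F) = m_g(χ_K) = m_g(μ_K) ≤ m_f(μ_F)`.
-/

theorem isPrimaryCyclic_iff {E V : Type*} [Field E] [AddCommGroup V] [Module E V]
    [FiniteDimensional E V] {Y : V →ₗ[E] V} {f : E[X]} (hf : Irreducible f) :
    IsPrimaryCyclic Y f ↔
      f ∣ Y.charpoly ∧ emultiplicity f Y.charpoly ≤ emultiplicity f (minpoly E Y) := by
  have hcast {p : E[X]} (hp : p.Monic) : (multiplicity f p : ℕ∞) = emultiplicity f p :=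
    (FiniteMultiplicity.of_prime_left hf.prime hp.ne_zero).emultiplicity_eq_multiplicity.symm
  have hle := emultiplicity_le_emultiplicity_of_dvd_right (a := f) Y.minpoly_dvd_charpoly
  rw [IsPrimaryCyclic, Nat.pos_iff_ne_zero, multiplicity_ne_zero, ← Nat.cast_inj (R := ℕ∞),
    hcast Y.charpoly_monic, hcast (minpoly.monic Y.isIntegral)]
  exact and_congr_right fun _ => ⟨le_of_eq, fun h => h.antisymm hle⟩

theorem isCoprime_of_monic_of_irreducible_of_ne {K : Type*} [Field K] {p q : K[X]} (hp : p.Monic)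
    (hpi : Irreducible p) (hq : q.Monic) (hqi : Irreducible q) (hpq : p ≠ q) : IsCoprime p q :=
  hpi.coprime_iff_not_dvd.2 fun h =>
    hpq (eq_of_monic_of_associated hp hq (hpi.associated_of_dvd hqi h))

section MulSemiringAction

variable {G R : Type*} [Group G]

theorem irreducible_smul [Semiring R] [MulSemiringAction G R] (σ : G) {a : R}
    (ha : Irreducible a) : Irreducible (σ • a) :=
  (MulEquiv.irreducible_iff (MulSemiringAction.toRingEquiv G R σ)).2 ha

variable [CommSemiring R] [MulSemiringAction G R]

theorem emultiplicity_smul_right (σ : G) (a b : R) :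
    emultiplicity a (σ • b) = emultiplicity (σ⁻¹ • a) b := by
  have h := emultiplicity_map_eq (MulSemiringAction.toRingEquiv G R σ) (a := σ⁻¹ • a) (b := b)
  simpa only [MulSemiringAction.toRingEquiv_apply_apply, smul_inv_smul] using h

theorem smul_prod_orbit (σ : G) (a : R) [Fintype (MulAction.orbit G a)] :
    σ • ∏ x : MulAction.orbit G a, (x : R) = ∏ x : MulAction.orbit G a, (x : R) :=
  Finset.smul_prod'.trans
    (Equiv.prod_comp (MulAction.toPerm σ) fun x : MulAction.orbit G a => (x : R))

end MulSemiringAction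

section GaloisConjugates

variable {F K : Type*} [Field F] [Field K] [Algebra F K]

theorem galois_smul_eq_map (σ : Gal(K/F)) (p : K[X]) : σ • p = p.map (σ : K →+* K) :=
  congrFun (smul_eq_map K σ) p

theorem smul_map_algebraMap (σ : Gal(K/F)) (p : F[X]) :
    σ • p.map (algebraMap F K) = p.map (algebraMap F K) := by
  ext
  simp [galois_smul_eq_map]

theorem dvd_map_iff_of_irreducible {f : F[X]} (hf : Irreducible f) {g : K[X]}
    (hg : Irreducible g) (hgf : g ∣ f.map (algebraMap F K)) (p : F[X]) :
    g ∣ p.map (algebraMap F K) ↔ f ∣ p := by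
  refine ⟨fun hgp => ?_, fun hfp => hgf.trans (Polynomial.map_dvd _ hfp)⟩
  by_contra hfp
  have hcoprime := (hf.coprime_iff_not_dvd.2 hfp).map (mapRingHom (algebraMap F K))
  exact hg.not_isUnit (hcoprime.isUnit_of_dvd' hgf hgp)

theorem monic_smul (σ : Gal(K/F)) {g : K[X]} (hg : g.Monic) : (σ • g).Monic :=
  galois_smul_eq_map σ g ▸ hg.map _

theorem pairwise_isCoprime_orbit {g : K[X]} (hgm : g.Monic) (hg : Irreducible g) :
    Pairwise fun x y : MulAction.orbit Gal(K/F) g => IsCoprime (x : K[X]) (y : K[X]) := by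
  rintro ⟨x, hx⟩ ⟨y, hy⟩ hxy
  obtain ⟨σ, rfl⟩ := MulAction.mem_orbit_iff.1 hx
  obtain ⟨τ, rfl⟩ := MulAction.mem_orbit_iff.1 hy
  exact isCoprime_of_monic_of_irreducible_of_ne (monic_smul σ hgm) (irreducible_smul σ hg)
    (monic_smul τ hgm) (irreducible_smul τ hg) (Subtype.coe_injective.ne hxy)

variable [FiniteDimensional F K] [IsGalois F K]

theorem exists_map_eq_of_forall_smul_eq {p : K[X]} (hp : ∀ σ : Gal(K/F), σ • p = p) :
    ∃ P : F[X], P.map (algebraMap F K) = p := by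
  refine (mem_map_range (algebraMap F K)).2 fun n => ?_
  refine (IsGalois.mem_range_algebraMap_iff_fixed _).2 fun σ => ?_
  exact (coeff_smul σ p n).symm.trans (by rw [hp σ])

theorem associated_map_prod_orbit {f : F[X]} (hf : Irreducible f) {g : K[X]} (hgm : g.Monic)
    (hg : Irreducible g) (hgf : g ∣ f.map (algebraMap F K))
    [Fintype (MulAction.orbit Gal(K/F) g)] :
    Associated (f.map (algebraMap F K)) (∏ h : MulAction.orbit Gal(K/F) g, (h : K[X])) := by
  refine associated_of_dvd_dvd ?_ (Fintype.prod_dvd_of_coprime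
    (pairwise_isCoprime_orbit hgm hg) ?_)
  · obtain ⟨P, hP⟩ := exists_map_eq_of_forall_smul_eq fun σ : Gal(K/F) => smul_prod_orbit σ g
    have hgP : g ∣ P.map (algebraMap F K) := by
      rw [hP]
      exact Finset.dvd_prod_of_mem (fun h : MulAction.orbit Gal(K/F) g => (h : K[X]))
        (Finset.mem_univ (⟨g, MulAction.mem_orbit_self g⟩ : MulAction.orbit Gal(K/F) g))
    rw [← hP]
    exact Polynomial.map_dvd _ ((dvd_map_iff_of_irreducible hf hg hgf P).1 hgP)
  · rintro ⟨h, hh⟩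
    obtain ⟨σ, rfl⟩ := MulAction.mem_orbit_iff.1 hh
    rw [← smul_map_algebraMap σ f]
    exact map_dvd (MulSemiringAction.toRingHom Gal(K/F) K[X] σ) hgf

theorem squarefree_map_algebraMap {f : F[X]} (hf : Irreducible f) :
    Squarefree (f.map (algebraMap F K)) := by
  obtain ⟨g, hgm, hg, hgf⟩ := exists_monic_irreducible_factor (f.map (algebraMap F K))
    (by simpa only [isUnit_map] using hf.not_isUnit)
  have : Fintype (MulAction.orbit Gal(K/F) g) := (Finite.finite_mulAction_orbit g).fintype
  rw [(associated_map_prod_orbit hf hgm hg hgf).squarefree_iff]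
  refine Finset.squarefree_prod_of_pairwise_isCoprime
    (fun x _ y _ hxy => (pairwise_isCoprime_orbit hgm hg hxy).isRelPrime) ?_
  rintro ⟨h, hh⟩ -
  obtain ⟨σ, rfl⟩ := MulAction.mem_orbit_iff.1 hh
  exact (irreducible_smul σ hg).squarefree

theorem emultiplicity_map_algebraMap {f : F[X]} (hf : Irreducible f) {g : K[X]}
    (hg : Irreducible g) (hgf : g ∣ f.map (algebraMap F K)) (p : F[X]) :
    emultiplicity g (p.map (algebraMap F K)) = emultiplicity f p := by
  obtain rfl | hp := eq_or_ne p 0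
  · simp
  have hfin : FiniteMultiplicity f p := .of_prime_left hf.prime hp
  obtain ⟨r, hr, hfr⟩ := hfin.exists_eq_pow_mul_and_not_dvd
  have hgf_one : emultiplicity g (f.map (algebraMap F K)) = 1 := by
    refine le_antisymm ?_ (Order.one_le_iff_pos.2 (emultiplicity_pos_of_dvd hgf))
    have hsq := (squarefree_iff_emultiplicity_le_one _).1 (squarefree_map_algebraMap (K := K) hf)
    exact (hsq g).resolve_right hg.not_isUnit
  have hgr : emultiplicity g (r.map (algebraMap F K)) = 0 :=
    emultiplicity_eq_zero.2 ((dvd_map_iff_of_irreducible hf hg hgf r).not.2 hfr)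
  conv_lhs => rw [hr]
  rw [Polynomial.map_mul, Polynomial.map_pow, emultiplicity_mul hg.prime,
    emultiplicity_pow hg.prime, hgf_one, hgr, mul_one, add_zero,
    hfin.emultiplicity_eq_multiplicity]

theorem natDegree_eq_finrank_mul_natDegree {f : F[X]} (hf : Irreducible f) {g : K[X]}
    (hgm : g.Monic) (hg : Irreducible g) (hgf : g ∣ f.map (algebraMap F K))
    (hfree : ∀ σ : Gal(K/F), σ ≠ 1 → σ • g ≠ g) :
    f.natDegree = finrank F K * g.natDegree := by
  have : Fintype (MulAction.orbit Gal(K/F) g) := (Finite.finite_mulAction_orbit g).fintype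
  have hstab : MulAction.stabilizer Gal(K/F) g = ⊥ :=
    (Subgroup.eq_bot_iff_forall _).2 fun σ hσ => not_imp_not.1 (hfree σ) hσ
  have hcard : Fintype.card (MulAction.orbit Gal(K/F) g) = finrank F K := by
    rw [Fintype.card_eq_nat_card, Nat.card_coe_set_eq, ← MulAction.index_stabilizer, hstab,
      Subgroup.index_bot, IsGalois.card_aut_eq_finrank]
  have horbit (h : MulAction.orbit Gal(K/F) g) :
      (h : K[X]).Monic ∧ (h : K[X]).natDegree = g.natDegree := by
    obtain ⟨h, hh⟩ := h
    obtain ⟨σ, rfl⟩ := MulAction.mem_orbit_iff.1 hh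
    exact ⟨monic_smul σ hgm, (congrArg natDegree (galois_smul_eq_map σ g)).trans (natDegree_map _)⟩
  calc f.natDegree = (∏ h : MulAction.orbit Gal(K/F) g, (h : K[X])).natDegree := by
        rw [← natDegree_map (algebraMap F K)]
        exact natDegree_eq_of_degree_eq
          (degree_eq_degree_of_associated (associated_map_prod_orbit hf hgm hg hgf))
    _ = ∑ h : MulAction.orbit Gal(K/F) g, (h : K[X]).natDegree :=
        natDegree_prod_of_monic _ _ fun h _ => (horbit h).1
    _ = finrank F K * g.natDegree := by simp [horbit, hcard]

end GaloisConjugates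

theorem coeff_polyToMatrix {R S n : Type*} [CommSemiring R] [Semiring S] [Fintype n]
    [DecidableEq n] (φ : S →+* Matrix n n R) (p : S[X]) (i j : n) (k : ℕ) :
    (φ.polyToMatrix p i j).coeff k = φ (p.coeff k) i j := by
  rw [← matPolyEquiv_coeff_apply]
  simp [RingHom.polyToMatrix, -AlgEquiv.symm_toRingEquiv]

theorem charpoly_comp_map {R S m n : Type*} [CommRing R] [CommRing S] [Fintype m] [DecidableEq m]
    [Fintype n] [DecidableEq n] (φ : S →+* Matrix n n R) (A : Matrix m m S) :
    ((A.map φ).comp m m n n R).charpoly = (φ.polyToMatrix A.charpoly).det := by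
  rw [Matrix.charpoly, Matrix.charpoly, det_det]
  congr 1
  ext ⟨i, i'⟩ ⟨j, j'⟩ k
  rw [comp_apply, Matrix.map_apply, coeff_polyToMatrix]
  by_cases hij : i = j <;> by_cases hij' : i' = j' <;> by_cases hk₀ : k = 0 <;>
    by_cases hk₁ : 1 = k <;> simp [hij, hij', hk₀, hk₁, coeff_X, coeff_C]

theorem charpoly_restrictScalars {R S V ι : Type*} [CommRing R] [CommRing S] [Algebra R S]
    [AddCommGroup V] [Module R V] [Module S V] [IsScalarTower R S V] [Module.Free R V]
    [Module.Finite R V] [Module.Free S V] [Module.Finite S V] [Fintype ι] [DecidableEq ι]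
    (e : Basis ι R S) (Y : V →ₗ[S] V) :
    (Y.restrictScalars R).charpoly =
      ((Algebra.leftMulMatrix e : S →+* Matrix ι ι R).polyToMatrix Y.charpoly).det := by
  classical
  let v := Free.chooseBasis S V
  rw [← LinearMap.charpoly_toMatrix (Y.restrictScalars R) (e.smulTower' v),
    LinearMap.restrictScalars_toMatrix, ← LinearMap.charpoly_toMatrix Y v, ← charpoly_comp_map]
  rfl

section RestrictScalars

variable {F K V : Type*} [Field F] [Field K] [Algebra F K] [AddCommGroup V] [Module F V]
  [Module K V] [IsScalarTower F K V]

theorem minpoly_restrictScalars_dvd_iff (Y : V →ₗ[K] V) (p : F[X]) :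
    minpoly F (Y.restrictScalars F) ∣ p ↔ minpoly K Y ∣ p.map (algebraMap F K) := by
  have haeval : aeval (Y.restrictScalars F) p =
      (aeval Y (p.map (algebraMap F K))).restrictScalars F := by
    rw [aeval_map_algebraMap]
    exact aeval_algHom_apply (Algebra.lsmul F F V : End K V →ₐ[F] End F V) Y p
  rw [minpoly.dvd_iff, minpoly.dvd_iff, haeval]
  exact (LinearMap.restrictScalars_injective F).eq_iff' rfl

variable [FiniteDimensional F K] [IsGalois F K]

theorem det_of_apply_basis_ne_zero [DecidableEq Gal(K/F)] (e : Basis Gal(K/F) F K) :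
    (Matrix.of fun σ τ : Gal(K/F) => σ (e τ)).det ≠ 0 := by
  set P := Matrix.of fun σ τ : Gal(K/F) => σ (e τ)
  have htrace : Pᵀ * P = (algebraMap F K).mapMatrix (Algebra.traceMatrix F e) := by
    ext i j
    simp [P, mul_apply, Algebra.traceMatrix_apply, Algebra.traceForm_apply,
      trace_eq_sum_automorphisms]
  have hdet : P.det * P.det = algebraMap F K (Algebra.discr F e) := by
    rw [Algebra.discr_def, RingHom.map_det, ← htrace, det_mul, det_transpose]
  have hdiscr : algebraMap F K (Algebra.discr F e) ≠ 0 := by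
    simpa using Algebra.discr_not_zero_of_basis F e
  exact left_ne_zero_of_mul (hdet ▸ hdiscr)

theorem map_det_polyToMatrix_leftMulMatrix [DecidableEq Gal(K/F)] (e : Basis Gal(K/F) F K)
    (p : K[X]) :
    ((Algebra.leftMulMatrix e : K →+* Matrix Gal(K/F) Gal(K/F) F).polyToMatrix p).det.map
      (algebraMap F K) = ∏ σ : Gal(K/F), σ • p := by
  set M := (Algebra.leftMulMatrix e : K →+* Matrix Gal(K/F) Gal(K/F) F).polyToMatrix p
  let P := Matrix.of fun σ τ : Gal(K/F) => σ (e τ)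
  -- `P` intertwines multiplication by `a` on `K` with the diagonal matrix of the conjugates `σ a`.
  have hconj : C.mapMatrix P * (mapRingHom (algebraMap F K)).mapMatrix M =
      diagonal (fun σ : Gal(K/F) => σ • p) * C.mapMatrix P := by
    ext σ τ k
    have hrepr := congrArg σ (e.sum_repr (p.coeff k * e τ))
    rw [diagonal_mul]
    simpa [mul_apply, P, M, coeff_polyToMatrix, Algebra.leftMulMatrix_eq_repr_mul, mul_comm,
      Algebra.smul_def] using hrepr
  have hdet := congrArg det hconj
  rw [det_mul, det_mul, det_diagonal, mul_comm, ← RingHom.map_det, ← RingHom.map_det] at hdet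
  exact mul_right_cancel₀ (C_ne_zero.2 (det_of_apply_basis_ne_zero e)) hdet

theorem emultiplicity_minpoly_le_restrictScalars {f : F[X]} (hf : Irreducible f) {g : K[X]}
    (hg : Irreducible g) (hgf : g ∣ f.map (algebraMap F K)) (Y : V →ₗ[K] V) :
    emultiplicity g (minpoly K Y) ≤ emultiplicity f (minpoly F (Y.restrictScalars F)) := by
  rw [← emultiplicity_map_algebraMap hf hg hgf]
  exact emultiplicity_le_emultiplicity_of_dvd_right
    ((minpoly_restrictScalars_dvd_iff Y _).1 dvd_rfl)

variable [FiniteDimensional K V]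

theorem exists_emultiplicity_minpoly_restrictScalars_le {f : F[X]} (hf : Irreducible f)
    (Y : V →ₗ[K] V) (hfY : f ∣ minpoly F (Y.restrictScalars F)) :
    ∃ g : K[X], g.Monic ∧ Irreducible g ∧ g ∣ f.map (algebraMap F K) ∧
      emultiplicity f (minpoly F (Y.restrictScalars F)) ≤ emultiplicity g (minpoly K Y) := by
  classical
  have : FiniteDimensional F V := .trans F K V
  by_contra! hlt
  have hY : minpoly K Y ≠ 0 := minpoly.ne_zero (Algebra.IsIntegral.isIntegral Y)
  have hZ : minpoly F (Y.restrictScalars F) ≠ 0 :=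
    minpoly.ne_zero (Algebra.IsIntegral.isIntegral _)
  have hdvd := (minpoly_restrictScalars_dvd_iff Y _).1 (dvd_refl (minpoly F (Y.restrictScalars F)))
  obtain ⟨r, hr⟩ := hfY
  -- If every `g ∣ f` had a smaller multiplicity, `r` would already annihilate `Y`.
  have hYr : minpoly K Y ∣ r.map (algebraMap F K) := by
    refine (UniqueFactorizationMonoid.dvd_iff_emultiplicity_le hY).2 fun p hp => ?_
    by_cases hpf : p ∣ f.map (algebraMap F K)
    · have hassoc := normalize_associated p
      have hlt_p := hlt _ (monic_normalize hp.ne_zero) (hassoc.symm.irreducible hp.irreducible)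
        (hassoc.dvd.trans hpf)
      rw [emultiplicity_eq_of_associated_left hassoc.symm, hr, emultiplicity_mul hf.prime,
        (FiniteMultiplicity.of_prime_left hf.prime hf.ne_zero).emultiplicity_self,
        add_comm] at hlt_p
      rw [emultiplicity_map_algebraMap hf hp.irreducible hpf]
      exact Order.le_of_lt_add_one hlt_p
    · rw [hr, Polynomial.map_mul] at hdvd
      have hle := emultiplicity_le_emultiplicity_of_dvd_right (a := p) hdvd
      rwa [emultiplicity_mul hp, emultiplicity_eq_zero.2 hpf, zero_add] at hle
  have hmul_dvd : f * r ∣ 1 * r := by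
    rw [← hr, one_mul]
    exact (minpoly_restrictScalars_dvd_iff Y r).2 hYr
  have hr0 : r ≠ 0 := right_ne_zero_of_mul (hr ▸ hZ)
  exact hf.not_isUnit (isUnit_of_dvd_one ((mul_dvd_mul_iff_right hr0).1 hmul_dvd))

variable [FiniteDimensional F V]

theorem map_charpoly_restrictScalars (Y : V →ₗ[K] V) :
    (Y.restrictScalars F).charpoly.map (algebraMap F K) = ∏ σ : Gal(K/F), σ • Y.charpoly := by
  classical
  have hcard : Fintype.card (Fin (finrank F K)) = Fintype.card Gal(K/F) := by
    rw [Fintype.card_fin, Fintype.card_eq_nat_card, IsGalois.card_aut_eq_finrank]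
  let e := (finBasis F K).reindex (Fintype.equivOfCardEq hcard)
  rw [charpoly_restrictScalars e, map_det_polyToMatrix_leftMulMatrix]

theorem emultiplicity_charpoly_restrictScalars {f : F[X]} (hf : Irreducible f) {g : K[X]}
    (hg : Irreducible g) (hgf : g ∣ f.map (algebraMap F K)) (Y : V →ₗ[K] V) :
    emultiplicity f (Y.restrictScalars F).charpoly =
      ∑ σ : Gal(K/F), emultiplicity (σ • g) Y.charpoly := by
  rw [← emultiplicity_map_algebraMap hf hg hgf, map_charpoly_restrictScalars,
    Finset.emultiplicity_prod hg.prime]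
  simp only [emultiplicity_smul_right]
  exact Equiv.sum_comp (Equiv.inv Gal(K/F)) fun σ => emultiplicity (σ • g) Y.charpoly

theorem emultiplicity_charpoly_le_restrictScalars {f : F[X]} (hf : Irreducible f) {g : K[X]}
    (hg : Irreducible g) (hgf : g ∣ f.map (algebraMap F K)) (Y : V →ₗ[K] V) :
    emultiplicity g Y.charpoly ≤ emultiplicity f (Y.restrictScalars F).charpoly := by
  rw [emultiplicity_charpoly_restrictScalars hf hg hgf]
  simpa only [one_smul] using Finset.single_le_sum_of_canonicallyOrdered
    (f := fun σ : Gal(K/F) => emultiplicity (σ • g) Y.charpoly) (Finset.mem_univ 1)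

theorem emultiplicity_charpoly_restrictScalars_le_iff {f : F[X]} (hf : Irreducible f) {g : K[X]}
    (hg : Irreducible g) (hgf : g ∣ f.map (algebraMap F K)) (Y : V →ₗ[K] V) :
    emultiplicity f (Y.restrictScalars F).charpoly ≤ emultiplicity g Y.charpoly ↔
      ∀ σ : Gal(K/F), σ ≠ 1 → ¬ σ • g ∣ Y.charpoly := by
  classical
  have hfin : FiniteMultiplicity g Y.charpoly := .of_prime_left hg.prime Y.charpoly_monic.ne_zero
  have hsum := emultiplicity_charpoly_restrictScalars hf hg hgf Y
  rw [← Finset.add_sum_erase _ _ (Finset.mem_univ 1), one_smul] at hsum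
  have hle_iff (n : ℕ∞) :
      emultiplicity g Y.charpoly + n ≤ emultiplicity g Y.charpoly ↔ n = 0 := by
    simpa using ENat.add_le_add_iff_left (n := n) (m := 0)
      (finiteMultiplicity_iff_emultiplicity_ne_top.1 hfin)
  rw [hsum, hle_iff, Finset.sum_eq_zero_iff]
  simp [emultiplicity_eq_zero]

theorem stmt10_general (Y : V →ₗ[K] V) {f : F[X]} (hf : Irreducible f) :
    IsPrimaryCyclic (Y.restrictScalars F) f ↔
      finrank F K ∣ f.natDegree ∧ ∃ g : K[X],
        g.Monic ∧ Irreducible g ∧ g.natDegree = f.natDegree / finrank F K ∧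
        g ∣ f.map (algebraMap F K) ∧
        IsPrimaryCyclic Y g ∧
        ∀ τ : K ≃ₐ[F] K, τ ≠ 1 →
          g.map (τ : K →+* K) ≠ g ∧ ¬ g.map (τ : K →+* K) ∣ Y.charpoly := by
  simp only [← galois_smul_eq_map]
  constructor
  · intro h
    obtain ⟨hfY, hle⟩ := (isPrimaryCyclic_iff hf).1 h
    have hfmin : f ∣ minpoly F (Y.restrictScalars F) :=
      dvd_of_emultiplicity_pos ((emultiplicity_pos_of_dvd hfY).trans_le hle)
    obtain ⟨g, hgm, hg, hgf, hfg⟩ := exists_emultiplicity_minpoly_restrictScalars_le hf Y hfmin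
    have hgmin := emultiplicity_le_emultiplicity_of_dvd_right (a := g) Y.minpoly_dvd_charpoly
    have hgY : g ∣ Y.charpoly :=
      dvd_of_emultiplicity_pos ((emultiplicity_pos_of_dvd hfmin).trans_le (hfg.trans hgmin))
    have hnot : ∀ σ : Gal(K/F), σ ≠ 1 → ¬ σ • g ∣ Y.charpoly :=
      (emultiplicity_charpoly_restrictScalars_le_iff hf hg hgf Y).1 (hle.trans (hfg.trans hgmin))
    have hne : ∀ σ : Gal(K/F), σ ≠ 1 → σ • g ≠ g := fun σ hσ h => hnot σ hσ (h.symm ▸ hgY)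
    have hdeg := natDegree_eq_finrank_mul_natDegree hf hgm hg hgf hne
    refine ⟨⟨_, hdeg⟩, g, hgm, hg, ?_, hgf, (isPrimaryCyclic_iff hg).2 ⟨hgY, ?_⟩,
      fun σ hσ => ⟨hne σ hσ, hnot σ hσ⟩⟩
    · rw [hdeg, Nat.mul_div_cancel_left _ finrank_pos]
    · exact (emultiplicity_charpoly_le_restrictScalars hf hg hgf Y).trans (hle.trans hfg)
  · rintro ⟨-, g, -, hg, -, hgf, h, hconj⟩
    obtain ⟨hgY, hle⟩ := (isPrimaryCyclic_iff hg).1 h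
    refine (isPrimaryCyclic_iff hf).2 ⟨?_, ?_⟩
    · exact dvd_of_emultiplicity_pos ((emultiplicity_pos_of_dvd hgY).trans_le
        (emultiplicity_charpoly_le_restrictScalars hf hg hgf Y))
    · calc emultiplicity f (Y.restrictScalars F).charpoly
        _ ≤ emultiplicity g Y.charpoly :=
          (emultiplicity_charpoly_restrictScalars_le_iff hf hg hgf Y).2 fun σ hσ => (hconj σ hσ).2
        _ ≤ emultiplicity g (minpoly K Y) := hle
        _ ≤ emultiplicity f (minpoly F (Y.restrictScalars F)) :=
          emultiplicity_minpoly_le_restrictScalars hf hg hgf Y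

end RestrictScalars

theorem stmt10 (q b c : ℕ) (hq : IsPrimePow q) (hb : 0 < b) (hc : 0 < c)
    (F K : Type*) [Field F] [Fintype F] (hF : Fintype.card F = q)
    [Field K] [Algebra F K] [FiniteDimensional F K] (hK : Module.finrank F K = b)
    (A : Matrix (Fin c) (Fin c) K) (f : Polynomial F) (hfm : f.Monic) (hfi : Irreducible f)
    (hfdvd : f ∣ LinearMap.charpoly ((A.mulVecLin).restrictScalars F)) :
    IsPrimaryCyclic ((A.mulVecLin).restrictScalars F) f ↔
      b ∣ f.natDegree ∧ ∃ g : Polynomial K,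
        g.Monic ∧ Irreducible g ∧ g.natDegree = f.natDegree / b ∧
        g ∣ f.map (algebraMap F K) ∧
        IsPrimaryCyclic A.mulVecLin g ∧
        ∀ τ : K ≃ₐ[F] K, τ ≠ 1 →
          g.map (τ : K →+* K) ≠ g ∧
          ¬ g.map (τ : K →+* K) ∣ LinearMap.charpoly A.mulVecLin := by
  have : Finite K := Module.finite_of_finite F
  subst hK
  exact stmt10_general A.mulVecLin hfi
end

section
/- Let c \ge 2 and b \ge 1 be integers and q a prime power, and let N(c,q,b) := {X \in GL(c,K) : there exist an integer r with c/2 < r \le c and a monic irreducible f \in F[t] of degree br such that X_{bc,q} is f-primary cyclic}. Then \log 2 - 1/(c+1) - 2/q^{bc/4} < |N(c,q,b)|/|GL(c,K)| \le \log 2 + 1/c, where q^{bc/4} denotes the real number q raised to the power bc/4 and \log denotes the natural logarithm. -/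
open Matrix Polynomial Module

/-!
Let `L` be the extension of `K` of degree `r`, where `c / 2 < r ≤ c`. Since `br > bc / 2`, a matrix
`X` is `f`-primary cyclic for some irreducible `f` of degree `br` exactly when some generator of
`L` over `F` is an eigenvalue of `X`.

Fix such a generator `a` and count the pairs `(X, v)` with `X v = a v`, where `v` ranges over the
vectors in `L ^ c` whose entries span `L` over `K`. These vectors form a single orbit of
`GL (c, K)`, stable under multiplication by `a`, so every `v` occurs in the same number of pairs.
Every nonzero eigenvector for `a` has entries spanning `L`, and the eigenspace is a line because
`c < 2r`, so every `X` with eigenvalue `a` occurs in `|L| - 1` pairs. Hence a proportion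
`1 / (|L| - 1)` of all matrices have `a` as an eigenvalue.

The generators of `L` over `F` which are eigenvalues of a given `X` form one conjugacy class over
`K`, of size `r`. The matrices primary cyclic for some `f` of degree `br` are therefore a
proportion `δ / r` of all matrices, where `δ` is the number of generators divided by `|L| - 1`,
which is close to `1`. Summing `1 / r` over `c / 2 < r ≤ c` gives approximately `log 2`.
-/

section Counting

open scoped Pointwise

theorem ncard_mul_eq_ncard_mul {α β : Type*} [Finite α] [Finite β] (R : α → β → Prop)
    {s : Set α} {t : Set β} {m n : ℕ} (hm : ∀ a ∈ s, {b ∈ t | R a b}.ncard = m)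
    (hn : ∀ b ∈ t, {a ∈ s | R a b}.ncard = n) : s.ncard * m = t.ncard * n := by
  classical
  have := Fintype.ofFinite α
  have := Fintype.ofFinite β
  rw [Set.ncard_eq_toFinset_card' s, Set.ncard_eq_toFinset_card' t]
  refine Finset.card_mul_eq_card_mul R (fun a ha => ?_) fun b hb => ?_
  · rw [← hm a (Set.mem_toFinset.1 ha), Set.ncard_eq_toFinset_card']
    congr 1
    ext b
    simp [Finset.mem_bipartiteAbove]
  · rw [← hn b (Set.mem_toFinset.1 hb), Set.ncard_eq_toFinset_card']
    congr 1
    ext a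
    simp [Finset.mem_bipartiteBelow]

theorem ncard_smul_eq_mul_ncard_orbit {G X : Type*} [Group G] [MulAction G X] {x y : X}
    (hy : y ∈ MulAction.orbit G x) :
    {g : G | g • x = y}.ncard * (MulAction.orbit G x).ncard = Nat.card G := by
  obtain ⟨h, rfl⟩ := hy
  have transporter_eq_coset :
      {g : G | g • x = h • x} = h • (MulAction.stabilizer G x : Set G) := by
    ext g
    simp [Set.mem_smul_set_iff_inv_smul_mem, mul_smul, inv_smul_eq_iff]
  rw [transporter_eq_coset, Set.ncard_smul_set, mul_comm, ← Nat.card_coe_set_eq,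
    ← Nat.card_coe_set_eq]
  exact (Nat.card_prod _ _).symm.trans
    (Nat.card_congr (MulAction.orbitProdStabilizerEquivGroup G x))

theorem ncard_mul_eq_card_of_smul_eq_map {G X : Type*} [Group G] [MulAction G X] [Finite G]
    [Finite X] {x : X} {φ : X → X} (hφ : Set.MapsTo φ (MulAction.orbit G x) (MulAction.orbit G x))
    {m : ℕ} {s : Set G} (hs : ∀ g ∈ s, {y ∈ MulAction.orbit G x | g • y = φ y}.ncard = m)
    (hs' : ∀ g, ∀ y ∈ MulAction.orbit G x, g • y = φ y → g ∈ s) : s.ncard * m = Nat.card G := by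
  set t := MulAction.orbit G x
  have ht : 0 < t.ncard := (Set.ncard_pos).2 (MulAction.nonempty_orbit x)
  have transporter : ∀ y ∈ t, {g ∈ s | g • y = φ y}.ncard = Nat.card G / t.ncard := by
    intro y hy
    have horb : MulAction.orbit G y = t := MulAction.orbit_eq_iff.2 hy
    rw [show {g ∈ s | g • y = φ y} = {g | g • y = φ y} from
      Set.ext fun g => and_iff_right_of_imp (hs' g y hy)]
    refine Nat.eq_div_of_mul_eq_left ht.ne' ?_
    have := ncard_smul_eq_mul_ncard_orbit (G := G) (x := y) (y := φ y) (horb ▸ hφ hy)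
    rwa [horb] at this
  rw [ncard_mul_eq_ncard_mul _ hs transporter]
  exact Nat.mul_div_cancel' (ncard_smul_eq_mul_ncard_orbit (G := G)
    (MulAction.mem_orbit_self x) ▸ Dvd.intro_left _ rfl)

end Counting

open scoped IntermediateField Matrix.Module

section SpanningFamilies

theorem exists_linearEquiv_ker_prod_of_surjective {K V W : Type*} [DivisionRing K]
    [AddCommGroup V] [Module K V] [AddCommGroup W] [Module K W] {φ : V →ₗ[K] W}
    (hφ : Function.Surjective φ) :
    ∃ e : V ≃ₗ[K] LinearMap.ker φ × W, ∀ x, (e x).2 = φ x := by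
  obtain ⟨s, hs⟩ := φ.exists_rightInverse_of_surjective (LinearMap.range_eq_top.2 hφ)
  obtain ⟨e, -, he⟩ := (LinearMap.exact_subtype_ker_map φ).splitSurjectiveEquiv
    (LinearMap.ker φ).injective_subtype ⟨s, hs⟩
  exact ⟨e, fun x => (LinearMap.congr_fun he x).symm⟩

theorem exists_linearEquiv_comp_eq_of_surjective {K V W : Type*} [DivisionRing K]
    [AddCommGroup V] [Module K V] [FiniteDimensional K V] [AddCommGroup W] [Module K W]
    {φ ψ : V →ₗ[K] W} (hφ : Function.Surjective φ) (hψ : Function.Surjective ψ) :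
    ∃ e : V ≃ₗ[K] V, φ ∘ₗ e.toLinearMap = ψ := by
  have finrank_ker_eq : finrank K (LinearMap.ker ψ) = finrank K (LinearMap.ker φ) := by
    have hφ' := φ.finrank_range_add_finrank_ker
    have hψ' := ψ.finrank_range_add_finrank_ker
    rw [LinearMap.range_eq_top.2 hφ] at hφ'
    rw [LinearMap.range_eq_top.2 hψ] at hψ'
    lia
  obtain ⟨eφ, heφ⟩ := exists_linearEquiv_ker_prod_of_surjective hφ
  obtain ⟨eψ, heψ⟩ := exists_linearEquiv_ker_prod_of_surjective hψ
  let κ := LinearEquiv.ofFinrankEq _ _ finrank_ker_eq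
  exact ⟨eψ ≪≫ₗ κ.prodCongr (.refl K W) ≪≫ₗ eφ.symm, LinearMap.ext fun x => by
    simp [← heφ, ← heψ]⟩

variable {ι K M : Type*} [Fintype ι] [Field K] [AddCommGroup M] [Module K M]

theorem exists_span_range_eq_top_of_finrank_le [FiniteDimensional K M]
    (h : finrank K M ≤ Fintype.card ι) : ∃ v : ι → M, Submodule.span K (Set.range v) = ⊤ := by
  rcases subsingleton_or_nontrivial M with hM | hM
  · exact ⟨0, Subsingleton.elim _ _⟩
  obtain ⟨f, hf⟩ : ∃ f : ι → Fin (finrank K M), Function.Surjective f := by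
    have : Nonempty (Fin (finrank K M)) := Fin.pos_iff_nonempty.1 finrank_pos
    obtain ⟨e⟩ := Function.Embedding.nonempty_of_card_le
      ((Fintype.card_fin (finrank K M)).trans_le h)
    exact ⟨Function.invFun e, Function.invFun_surjective e.injective⟩
  exact ⟨finBasis K M ∘ f, by rw [hf.range_comp, Basis.span_eq]⟩

variable [DecidableEq ι]

theorem span_range_matrix_smul_le (X : Matrix ι ι K) (v : ι → M) :
    Submodule.span K (Set.range (X • v)) ≤ Submodule.span K (Set.range v) := by
  rw [Submodule.span_le]
  rintro _ ⟨i, rfl⟩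
  exact Submodule.sum_mem _ fun j _ => Submodule.smul_mem _ _ (Submodule.subset_span ⟨j, rfl⟩)

theorem span_range_generalLinearGroup_smul (X : GL ι K) (v : ι → M) :
    Submodule.span K (Set.range (X • v)) = Submodule.span K (Set.range v) := by
  refine le_antisymm (span_range_matrix_smul_le _ v) ?_
  conv_lhs => rw [← inv_smul_smul X v]
  exact span_range_matrix_smul_le _ _

theorem exists_generalLinearGroup_smul_eq {v w : ι → M}
    (hv : Submodule.span K (Set.range v) = ⊤) (hw : Submodule.span K (Set.range w) = ⊤) :
    ∃ X : GL ι K, X • v = w := by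
  have surjective_of_span_eq_top : ∀ {u : ι → M}, Submodule.span K (Set.range u) = ⊤ →
      Function.Surjective (Fintype.linearCombination K u) := by
    intro u hu
    rw [← LinearMap.range_eq_top, Fintype.range_linearCombination, hu]
  obtain ⟨e, he⟩ := exists_linearEquiv_comp_eq_of_surjective
    (surjective_of_span_eq_top hv) (surjective_of_span_eq_top hw)
  have hunit : IsUnit (LinearMap.toMatrix' e.toLinearMap)ᵀ := by
    rw [Matrix.isUnit_transpose, LinearMap.isUnit_toMatrix'_iff]
    exact (Module.End.isUnit_iff _).2 e.bijective
  refine ⟨hunit.unit, funext fun i => ?_⟩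
  have := LinearMap.congr_fun he (Pi.single i 1)
  rw [Fintype.linearCombination_apply_single, one_smul] at this
  rw [← this, Units.smul_def]
  simp [Fintype.linearCombination_apply, LinearMap.toMatrix'_apply]

theorem orbit_generalLinearGroup_eq_setOf_span_eq_top {v : ι → M}
    (hv : Submodule.span K (Set.range v) = ⊤) :
    MulAction.orbit (GL ι K) v = {w | Submodule.span K (Set.range w) = ⊤} := by
  ext w
  refine ⟨?_, exists_generalLinearGroup_smul_eq hv⟩
  rintro ⟨X, rfl⟩
  exact (span_range_generalLinearGroup_smul X v).trans hv

end SpanningFamilies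

section Eigenvectors

theorem eq_top_of_mul_mem_of_adjoin_eq_top {K L : Type*} [Field K] [Field L] [Algebra K L]
    {a : L} (ha : Algebra.adjoin K {a} = ⊤) {W : Submodule K L} (hW : W ≠ ⊥)
    (hmul : ∀ x ∈ W, a * x ∈ W) : W = ⊤ := by
  obtain ⟨w, hw, hw0⟩ := W.exists_mem_ne_zero_of_ne_bot hW
  refine Submodule.eq_top_iff'.2 fun y => ?_
  obtain ⟨p, hp⟩ : y / w ∈ (aeval (R := K) a).range := by
    rw [← Algebra.adjoin_singleton_eq_range_aeval, ha]
    exact Algebra.mem_top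
  have := aeval_apply_smul_mem_of_le_comap' hw p a hmul
  rwa [show aeval a p = y / w from hp, smul_eq_mul, div_mul_cancel₀ _ hw0] at this

theorem rootMultiplicity_map_le_one {K L : Type*} [Field K] [Field L] [Algebra K L] {a : L}
    (ha : IsSeparable K a) {p : K[X]} (hp : p ≠ 0)
    (hdeg : p.natDegree < 2 * (minpoly K a).natDegree) :
    (p.map (algebraMap K L)).rootMultiplicity a ≤ 1 := by
  by_cases hroot : aeval a p = 0
  · obtain ⟨g, rfl⟩ := minpoly.dvd K a hroot
    have hg : aeval a g ≠ 0 := by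
      intro hga
      have := natDegree_le_of_dvd (minpoly.dvd K a hga) (right_ne_zero_of_mul hp)
      rw [natDegree_mul' (mul_ne_zero (leadingCoeff_ne_zero.2 (left_ne_zero_of_mul hp))
        (leadingCoeff_ne_zero.2 (right_ne_zero_of_mul hp)))] at hdeg
      lia
    have mult_g : (g.map (algebraMap K L)).rootMultiplicity a = 0 :=
      rootMultiplicity_eq_zero (by rwa [IsRoot.def, eval_map_algebraMap])
    rw [Polynomial.map_mul, rootMultiplicity_mul (by
      rw [← Polynomial.map_mul]; exact map_ne_zero hp), mult_g, add_zero]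
    exact rootMultiplicity_le_one_of_separable (Separable.map ha) a
  · rw [rootMultiplicity_eq_zero (by rwa [IsRoot.def, eval_map_algebraMap])]
    exact zero_le_one

theorem ne_zero_of_span_range_eq_top {ι K M : Type*} [Semiring K] [AddCommMonoid M] [Module K M]
    [Nontrivial M] {v : ι → M} (hv : Submodule.span K (Set.range v) = ⊤) : v ≠ 0 := by
  rintro rfl
  refine bot_ne_top (hv ▸ Eq.symm (Submodule.span_eq_bot.2 ?_))
  rintro _ ⟨i, rfl⟩
  rfl

theorem span_range_smul_eq_top {ι K L : Type*} [Field K] [Field L] [Algebra K L] {a : L}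
    (ha : a ≠ 0) {v : ι → L} (hv : Submodule.span K (Set.range v) = ⊤) :
    Submodule.span K (Set.range (a • v)) = ⊤ := by
  have hsurj : Function.Surjective (LinearMap.mulLeft K a) := fun y => ⟨a⁻¹ * y, by simp [ha]⟩
  have := congrArg (Submodule.map (LinearMap.mulLeft K a)) hv
  rwa [Submodule.map_span, ← Set.range_comp, Submodule.map_top,
    LinearMap.range_eq_top.2 hsurj] at this

variable {ι K L : Type*} [Fintype ι] [DecidableEq ι] [Field K] [Field L] [Algebra K L]

theorem map_algebraMap_mulVec (X : Matrix ι ι K) (v : ι → L) :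
    X.map (algebraMap K L) *ᵥ v = X • v := by
  ext i
  simp [Matrix.mulVec, dotProduct, Algebra.smul_def]

theorem isRoot_charpoly_map_iff (X : Matrix ι ι K) (a : L) :
    (X.map (algebraMap K L)).charpoly.IsRoot a ↔ aeval a X.charpoly = 0 := by
  rw [Matrix.charpoly_map, IsRoot.def, eval_map_algebraMap]

theorem aeval_charpoly_eq_zero_iff_exists_smul_eq_smul (X : Matrix ι ι K) (a : L) :
    aeval a X.charpoly = 0 ↔ ∃ v : ι → L, v ≠ 0 ∧ X • v = a • v := by
  rw [← isRoot_charpoly_map_iff, ← Matrix.charpoly_toLin',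
    ← Module.End.hasEigenvalue_iff_isRoot_charpoly]
  simp only [← map_algebraMap_mulVec, ← Matrix.toLin'_apply, ← Module.End.mem_eigenspace_iff]
  exact ((Submodule.ne_bot_iff _)).trans (exists_congr fun v => and_comm)

variable [FiniteDimensional K L] {a : L}

theorem span_range_eq_top_of_smul_eq_smul (ha : K⟮a⟯ = ⊤) {X : Matrix ι ι K} {v : ι → L}
    (hv : v ≠ 0) (h : X • v = a • v) : Submodule.span K (Set.range v) = ⊤ := by
  refine eq_top_of_mul_mem_of_adjoin_eq_top
    (Algebra.adjoin_eq_top_of_primitive_element (Algebra.IsAlgebraic.isAlgebraic a) ha) ?_ ?_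
  · obtain ⟨i, hi⟩ := Function.ne_iff.1 hv
    exact (Submodule.ne_bot_iff _).2 ⟨v i, Submodule.subset_span ⟨i, rfl⟩, hi⟩
  · change Submodule.span K (Set.range v) ≤
      (Submodule.span K (Set.range v)).comap (LinearMap.mulLeft K a)
    refine Submodule.span_le.2 ?_
    rintro _ ⟨i, rfl⟩
    refine span_range_matrix_smul_le X v (Submodule.subset_span ⟨i, ?_⟩)
    exact congrFun h i

theorem finrank_eigenspace_eq_one [Algebra.IsSeparable K L] (ha : K⟮a⟯ = ⊤)
    (hι : Fintype.card ι < 2 * finrank K L) {X : Matrix ι ι K} (hX : aeval a X.charpoly = 0) :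
    finrank L (Module.End.eigenspace (Matrix.toLin' (X.map (algebraMap K L))) a) = 1 := by
  refine le_antisymm ((LinearMap.finrank_eigenspace_le _ a).trans ?_) ?_
  · rw [Matrix.charpoly_toLin', Matrix.charpoly_map]
    refine rootMultiplicity_map_le_one (Algebra.IsSeparable.isSeparable K a)
      X.charpoly_monic.ne_zero ?_
    rwa [X.charpoly_natDegree_eq_dim, (Field.primitive_element_iff_minpoly_natDegree_eq K a).1 ha]
  · rw [Nat.succ_le_iff, finrank_pos_iff, Submodule.nontrivial_iff_ne_bot]
    rw [← isRoot_charpoly_map_iff, ← Matrix.charpoly_toLin'] at hX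
    exact Module.End.hasEigenvalue_iff_isRoot_charpoly _ _ |>.2 hX

theorem ncard_spanning_eigenvectors [Algebra.IsSeparable K L] (ha : K⟮a⟯ = ⊤)
    (hι : Fintype.card ι < 2 * finrank K L) {X : Matrix ι ι K} (hX : aeval a X.charpoly = 0) :
    {v : ι → L | Submodule.span K (Set.range v) = ⊤ ∧ X • v = a • v}.ncard = Nat.card L - 1 := by
  set E := Module.End.eigenspace (Matrix.toLin' (X.map (algebraMap K L))) a with hE
  have mem_E : ∀ v, v ∈ E ↔ X • v = a • v := fun v => by
    rw [hE, Module.End.mem_eigenspace_iff, Matrix.toLin'_apply, map_algebraMap_mulVec]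
  have spanning_eq : {v : ι → L | Submodule.span K (Set.range v) = ⊤ ∧ X • v = a • v} =
      (E : Set (ι → L)) \ {0} := by
    ext v
    simp only [Set.mem_ofPred_eq, Set.mem_sdiff, SetLike.mem_coe, mem_E, Set.mem_singleton_iff]
    exact ⟨fun ⟨hv, h⟩ => ⟨h, ne_zero_of_span_range_eq_top hv⟩,
      fun ⟨h, hv⟩ => ⟨span_range_eq_top_of_smul_eq_smul ha hv h, h⟩⟩
  rw [spanning_eq, Set.ncard_sdiff_singleton_of_mem E.zero_mem, ← Nat.card_coe_set_eq]
  change Nat.card E - 1 = _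
  rw [Module.natCard_eq_pow_finrank (K := L), finrank_eigenspace_eq_one ha hι hX, pow_one]

theorem ncard_aeval_charpoly_eq_zero_mul [Finite K] (ha : K⟮a⟯ = ⊤) (ha0 : a ≠ 0)
    (hle : finrank K L ≤ Fintype.card ι) (hlt : Fintype.card ι < 2 * finrank K L) :
    {X : GL ι K | aeval a X.1.charpoly = 0}.ncard * (Nat.card L - 1) = Nat.card (GL ι K) := by
  have : Finite L := Module.finite_of_finite K
  obtain ⟨v, hv⟩ := exists_span_range_eq_top_of_finrank_le (M := L) hle
  have horb := orbit_generalLinearGroup_eq_setOf_span_eq_top hv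
  refine ncard_mul_eq_card_of_smul_eq_map (x := v) (φ := (a • ·)) ?_ ?_ ?_
  · rw [horb]
    exact fun w hw => span_range_smul_eq_top ha0 hw
  · rw [horb]
    exact fun X hX => ncard_spanning_eigenvectors ha hlt hX
  · rw [horb]
    exact fun X w hw h => (aeval_charpoly_eq_zero_iff_exists_smul_eq_smul X.1 a).2
      ⟨w, ne_zero_of_span_range_eq_top hw, h⟩

end Eigenvectors

section PrimaryCyclic

theorem isPrimaryCyclic_iff_dvd_minpoly {E V : Type*} [Field E] [AddCommGroup V] [Module E V]
    [FiniteDimensional E V] {Y : V →ₗ[E] V} {f : E[X]} (hf : f.Monic)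
    (hdeg : finrank E V < 2 * f.natDegree) : IsPrimaryCyclic Y f ↔ f ∣ minpoly E Y := by
  refine ⟨fun h => dvd_of_multiplicity_pos (h.2 ▸ h.1), fun h => ?_⟩
  have sq_not_dvd : ¬ f ^ 2 ∣ Y.charpoly := fun hsq => by
    have := natDegree_le_of_dvd hsq Y.charpoly_monic.ne_zero
    rw [hf.natDegree_pow, LinearMap.charpoly_natDegree] at this
    lia
  have multiplicity_eq_one : ∀ p, f ∣ p → p ∣ Y.charpoly → multiplicity f p = 1 :=
    fun p hfp hp => multiplicity_eq_of_dvd_of_not_dvd (by simpa using hfp)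
      fun hsq => sq_not_dvd (hsq.trans hp)
  have hmin := LinearMap.minpoly_dvd_charpoly Y
  rw [IsPrimaryCyclic, multiplicity_eq_one _ (h.trans hmin) dvd_rfl, multiplicity_eq_one _ h hmin]
  exact ⟨one_pos, rfl⟩

theorem not_isUnit_aeval_of_dvd_minpoly {F A : Type*} [Field F] [Ring A] [Algebra F A] {y : A}
    (hy : IsIntegral F y) {f : F[X]} (hf : ¬ IsUnit f) (h : f ∣ minpoly F y) :
    ¬ IsUnit (aeval y f) := by
  intro hunit
  obtain ⟨g, hg⟩ := h
  have hg0 : g ≠ 0 := right_ne_zero_of_mul (hg ▸ minpoly.ne_zero hy)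
  have hgy : aeval y g = 0 := by
    rw [← hunit.mul_right_eq_zero, ← map_mul, ← hg, minpoly.aeval]
  have : f * g ∣ 1 * g := by
    rw [one_mul, ← hg]
    exact minpoly.dvd F y hgy
  exact hf (isUnit_of_dvd_one ((mul_dvd_mul_iff_right hg0).1 this))

theorem dvd_minpoly_iff_exists_mem_spectrum {F L A : Type*} [Field F] [Field L] [Algebra F L]
    [Ring A] [Algebra F A] [Algebra L A] [IsScalarTower F L A] {y : A} (hy : IsIntegral F y)
    {f : F[X]} (hf : f.Monic) (hirr : Irreducible f) (hs : (f.map (algebraMap F L)).Splits) :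
    f ∣ minpoly F y ↔ ∃ a ∈ spectrum L y, aeval a f = 0 := by
  constructor
  · intro h
    have := not_isUnit_aeval_of_dvd_minpoly hy hirr.not_isUnit h
    rw [← aeval_map_algebraMap L, hs.eq_prod_roots_of_monic (hf.map _)] at this
    simpa [eval_map_algebraMap] using spectrum.exists_mem_of_not_isUnit_aeval_prod this
  · rintro ⟨a, ha, hfa⟩
    have hmin : aeval a (minpoly F y) ∈ spectrum L (0 : A) := by
      have := spectrum.subset_polynomial_aeval y ((minpoly F y).map (algebraMap F L)) ⟨a, ha, rfl⟩
      simpa only [aeval_map_algebraMap, minpoly.aeval, eval_map_algebraMap] using this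
    have hmin0 : aeval a (minpoly F y) = 0 := by
      by_contra h0
      exact spectrum.mem_iff.1 hmin (by simpa using (IsUnit.mk0 _ h0).map (algebraMap L A))
    rw [minpoly.eq_of_irreducible_of_monic hirr hfa hf]
    exact minpoly.dvd F a hmin0

theorem splits_map_of_irreducible_of_natDegree_eq_finrank {F L : Type*} [Field F] [Finite F]
    [Field L] [Algebra F L] [FiniteDimensional F L] {f : F[X]} (hirr : Irreducible f)
    (hdeg : f.natDegree = finrank F L) : (f.map (algebraMap F L)).Splits := by
  have : Finite L := Module.finite_of_finite F
  have := Fintype.ofFinite L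
  have hdvd : f ∣ X ^ Nat.card L - X := by
    rw [Module.natCard_eq_pow_finrank (K := F), ← hirr.natDegree_dvd_iff_dvd_X_pow_card_pow_sub_X,
      hdeg]
  have hsplits := (FiniteField.isSplittingField_sub L F).splits
  rw [← Nat.card_eq_fintype_card] at hsplits
  exact hsplits.of_dvd (map_ne_zero (FiniteField.X_pow_card_sub_X_ne_zero F Finite.one_lt_card))
    (Polynomial.map_dvd _ hdvd)

variable {ι F K L : Type*} [Fintype ι] [DecidableEq ι] [Field F] [Field K] [Field L] [Algebra F K]

theorem minpoly_restrictScalars_mulVecLin (X : Matrix ι ι K) :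
    minpoly F (X.mulVecLin.restrictScalars F) = minpoly F X := by
  let restrict : Module.End K (ι → K) →ₐ[F] Module.End F (ι → K) :=
    Algebra.lsmul F F (ι → K)
  have hrestrict : Function.Injective restrict := LinearMap.restrictScalars_injective F
  rw [← minpoly.algHom_eq (Matrix.toLinAlgEquiv'.toAlgHom.restrictScalars F)
    Matrix.toLinAlgEquiv'.injective X, ← minpoly.algHom_eq restrict hrestrict]
  rfl

variable [Algebra K L] [Algebra F L] [IsScalarTower F K L]

theorem minpoly_matrix_map (X : Matrix ι ι K) :
    minpoly F (X.map (algebraMap K L)) = minpoly F X :=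
  minpoly.algHom_eq (IsScalarTower.toAlgHom F K L).mapMatrix
    (Matrix.map_injective (algebraMap K L).injective) X

theorem dvd_minpoly_restrictScalars_mulVecLin_iff [Finite F] [FiniteDimensional F L]
    (X : Matrix ι ι K) {f : F[X]} (hf : f.Monic) (hirr : Irreducible f)
    (hdeg : f.natDegree = finrank F L) :
    f ∣ minpoly F (X.mulVecLin.restrictScalars F) ↔
      ∃ a : L, aeval a X.charpoly = 0 ∧ aeval a f = 0 := by
  rw [minpoly_restrictScalars_mulVecLin, ← minpoly_matrix_map (L := L),
    dvd_minpoly_iff_exists_mem_spectrum (L := L) (Algebra.IsIntegral.isIntegral _) hf hirr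
      (splits_map_of_irreducible_of_natDegree_eq_finrank hirr hdeg)]
  simp only [Matrix.mem_spectrum_iff_isRoot_charpoly, isRoot_charpoly_map_iff]

end PrimaryCyclic

section Generators

theorem eq_of_irreducible_of_dvd_of_natDegree_lt_add {F : Type*} [Field F] {f g p : F[X]}
    (hf : f.Monic) (hg : g.Monic) (hfirr : Irreducible f) (hgirr : Irreducible g) (hp : p ≠ 0)
    (hfp : f ∣ p) (hgp : g ∣ p) (hlt : p.natDegree < f.natDegree + g.natDegree) : f = g := by
  by_contra hne
  have hcop : IsCoprime f g := hfirr.coprime_iff_not_dvd.2 fun hdvd =>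
    hne (eq_of_monic_of_associated hf hg (hfirr.associated_of_dvd hgirr hdvd))
  have := natDegree_le_of_dvd (hcop.mul_dvd hfp hgp) hp
  rw [hf.natDegree_mul hg] at this
  lia

theorem ne_zero_of_adjoin_simple_eq_top {K L : Type*} [Field K] [Field L] [Algebra K L]
    (h : 1 < finrank K L) {a : L} (ha : K⟮a⟯ = ⊤) : a ≠ 0 := by
  rintro rfl
  rw [IntermediateField.adjoin_zero, IntermediateField.bot_eq_top_iff_finrank_eq_one] at ha
  exact h.ne' ha

variable {F K L : Type*} [Field F] [Field K] [Field L] [Algebra F K] [Algebra K L] [Algebra F L]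
  [IsScalarTower F K L] [FiniteDimensional F L] [FiniteDimensional K L]

theorem setOf_adjoin_eq_top_and_aeval_eq_zero {p : K[X]} (hp : p ≠ 0)
    (hdeg : p.natDegree < 2 * finrank K L) {a : L} (ha : F⟮a⟯ = ⊤) (hroot : aeval a p = 0) :
    {x : L | F⟮x⟯ = ⊤ ∧ aeval x p = 0} = (minpoly K a).rootSet L := by
  have natDegree_minpoly : ∀ x : L, F⟮x⟯ = ⊤ → (minpoly K x).natDegree = finrank K L :=
    fun x hx => (Field.primitive_element_iff_minpoly_natDegree_eq K x).1
      (IntermediateField.adjoin_eq_top_of_adjoin_eq_top F hx)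
  have hint : ∀ x : L, IsIntegral K x := Algebra.IsIntegral.isIntegral
  ext x
  rw [← isConjRoot_iff_mem_minpoly_rootSet (hint a)]
  constructor
  · rintro ⟨hx, hxroot⟩
    refine eq_of_irreducible_of_dvd_of_natDegree_lt_add (minpoly.monic (hint a))
      (minpoly.monic (hint x)) (minpoly.irreducible (hint a)) (minpoly.irreducible (hint x)) hp
      (minpoly.dvd K a hroot) (minpoly.dvd K x hxroot) ?_
    rwa [natDegree_minpoly a ha, natDegree_minpoly x hx, ← two_mul]
  · intro hconj
    refine ⟨?_, aeval_eq_zero_of_dvd_aeval_eq_zero (minpoly.dvd K a hroot) hconj.aeval_eq_zero⟩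
    rw [Field.primitive_element_iff_minpoly_natDegree_eq] at ha ⊢
    rw [← ha, hconj.of_isScalarTower (Algebra.IsIntegral.isIntegral (R := F) a)]

theorem ncard_adjoin_eq_top_and_aeval_eq_zero [IsGalois K L] {p : K[X]} (hp : p ≠ 0)
    (hdeg : p.natDegree < 2 * finrank K L) {a : L} (ha : F⟮a⟯ = ⊤) (hroot : aeval a p = 0) :
    {x : L | F⟮x⟯ = ⊤ ∧ aeval x p = 0}.ncard = finrank K L := by
  rw [setOf_adjoin_eq_top_and_aeval_eq_zero hp hdeg ha hroot, ← Nat.card_coe_set_eq,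
    Nat.card_eq_fintype_card, card_rootSet_eq_natDegree (Algebra.IsSeparable.isSeparable K a)
      (Normal.splits inferInstance a)]
  exact (Field.primitive_element_iff_minpoly_natDegree_eq K a).1
    (IntermediateField.adjoin_eq_top_of_adjoin_eq_top F ha)

end Generators

section CountingGenerators

variable {F L : Type*} [Field F] [Finite F] [Field L] [Algebra F L] [FiniteDimensional F L]

theorem ncard_natDegree_minpoly_eq_le (d : ℕ) :
    {a : L | (minpoly F a).natDegree = d}.ncard ≤ Nat.card F ^ d := by
  have hint : ∀ a : L, IsIntegral F a := Algebra.IsIntegral.isIntegral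
  rcases eq_or_ne d 0 with rfl | hd
  · have : {a : L | (minpoly F a).natDegree = 0} = ∅ :=
      Set.eq_empty_of_forall_notMem fun a => (minpoly.natDegree_pos (hint a)).ne'
    simp [this]
  have hne : (X ^ Nat.card F ^ d - X : F[X]) ≠ 0 :=
    FiniteField.X_pow_card_pow_sub_X_ne_zero F hd Finite.one_lt_card
  have hsub : {a : L | (minpoly F a).natDegree = d} ⊆
      (X ^ Nat.card F ^ d - X : F[X]).rootSet L := by
    rintro a rfl
    exact (mem_rootSet_of_ne hne).2 (aeval_eq_zero_of_dvd_aeval_eq_zero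
      ((minpoly.irreducible (hint a)).natDegree_dvd_iff_dvd_X_pow_card_pow_sub_X.1 dvd_rfl)
      (minpoly.aeval F a))
  refine (Set.ncard_le_ncard hsub (rootSet_finite _ _)).trans ((ncard_rootSet_le _ _).trans ?_)
  rw [FiniteField.X_pow_card_pow_sub_X_natDegree_eq F hd Finite.one_lt_card]

theorem natDegree_minpoly_le_half_of_adjoin_ne_top {F L : Type*} [Field F] [Field L] [Algebra F L]
    [FiniteDimensional F L] {a : L} (ha : F⟮a⟯ ≠ ⊤) :
    (minpoly F a).natDegree ≤ finrank F L / 2 := by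
  rw [Ne, Field.primitive_element_iff_minpoly_natDegree_eq] at ha
  obtain ⟨k, hk⟩ := minpoly.degree_dvd (Algebra.IsIntegral.isIntegral (R := F) a)
  have hpos : 0 < finrank F L := finrank_pos
  have hk2 : 2 ≤ k := by
    by_contra! hlt
    interval_cases k <;> lia
  rw [Nat.le_div_iff_mul_le two_pos, hk]
  exact Nat.mul_le_mul_left _ hk2

theorem card_lt_ncard_adjoin_eq_top_add :
    Nat.card L < {a : L | F⟮a⟯ = ⊤}.ncard + 2 * Nat.card F ^ (finrank F L / 2) := by
  have : Finite L := Module.finite_of_finite F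
  set k := finrank F L / 2
  have hsub : {a : L | F⟮a⟯ = ⊤}ᶜ ⊆
      ⋃ d ∈ Finset.range (k + 1), {a : L | (minpoly F a).natDegree = d} := by
    intro a ha
    simpa [Nat.lt_succ_iff] using natDegree_minpoly_le_half_of_adjoin_ne_top ha
  have hcompl : {a : L | F⟮a⟯ = ⊤}ᶜ.ncard < 2 * Nat.card F ^ k :=
    calc {a : L | F⟮a⟯ = ⊤}ᶜ.ncard
        ≤ ∑ d ∈ Finset.range (k + 1), {a : L | (minpoly F a).natDegree = d}.ncard :=
          (Set.ncard_le_ncard hsub).trans (Finset.set_ncard_biUnion_le _ _)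
      _ ≤ ∑ d ∈ Finset.range (k + 1), Nat.card F ^ d :=
          Finset.sum_le_sum fun d _ => ncard_natDegree_minpoly_eq_le d
      _ < 2 * Nat.card F ^ k := by
          rw [Finset.sum_range_succ, two_mul]
          gcongr
          exact Nat.geomSum_lt Finite.one_lt_card fun d hd => Finset.mem_range.1 hd
  rw [← Set.ncard_add_ncard_compl {a : L | F⟮a⟯ = ⊤}]
  lia

theorem one_sub_lt_ncard_adjoin_eq_top_div :
    1 - 2 / (Nat.card F : ℝ) ^ ((finrank F L : ℝ) / 2) <
      {a : L | F⟮a⟯ = ⊤}.ncard / ((Nat.card L : ℝ) - 1) := by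
  have : Finite L := Module.finite_of_finite F
  set x := (Nat.card F : ℝ) ^ ((finrank F L : ℝ) / 2)
  have hF : (1 : ℝ) < Nat.card F := mod_cast Finite.one_lt_card
  have hx : 1 < x := Real.one_lt_rpow hF (half_pos (Nat.cast_pos.2 finrank_pos))
  have hL : (Nat.card L : ℝ) = x * x := by
    rw [← Real.rpow_add (one_pos.trans hF), add_halves, Real.rpow_natCast,
      Module.natCard_eq_pow_finrank (K := F), Nat.cast_pow]
  have hfloor : (Nat.card F : ℝ) ^ (finrank F L / 2) ≤ x := by
    rw [← Real.rpow_natCast]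
    exact Real.rpow_le_rpow_of_exponent_le hF.le Nat.cast_div_le
  have hcount : (Nat.card L : ℝ) + 1 ≤
      {a : L | F⟮a⟯ = ⊤}.ncard + 2 * (Nat.card F : ℝ) ^ (finrank F L / 2) :=
    mod_cast card_lt_ncard_adjoin_eq_top_add
  rw [lt_div_iff₀ (by rw [hL]; nlinarith)]
  calc (1 - 2 / x) * (Nat.card L - 1) = x * x - 2 * x - 1 + 2 / x := by
        rw [hL]
        field_simp
        ring
    _ < x * x + 1 - 2 * x := by
        have : 2 / x < 2 := div_lt_self two_pos hx
        linarith
    _ ≤ _ := by linarith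

theorem ncard_adjoin_eq_top_div_le_one (h : 1 < finrank F L) :
    {a : L | F⟮a⟯ = ⊤}.ncard / ((Nat.card L : ℝ) - 1) ≤ 1 := by
  have : Finite L := Module.finite_of_finite F
  have hsub : {a : L | F⟮a⟯ = ⊤} ⊆ Set.univ \ {0} :=
    fun a ha => ⟨Set.mem_univ a, ne_zero_of_adjoin_simple_eq_top h ha⟩
  have hle := Set.ncard_le_ncard hsub
  rw [Set.ncard_sdiff_singleton_of_mem (Set.mem_univ 0), Set.ncard_univ] at hle
  have hL : 1 < Nat.card L := Finite.one_lt_card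
  rw [div_le_one (by simpa using hL), ← Nat.cast_pred (one_pos.trans hL)]
  exact_mod_cast hle

end CountingGenerators

section PrimaryCyclicSet

theorem finrank_pi_restrictScalars {ι F K : Type*} [Fintype ι] [Field F] [Field K] [Algebra F K]
    [FiniteDimensional F K] : finrank F (ι → K) = finrank F K * Fintype.card ι := by
  rw [← finrank_mul_finrank F K (ι → K), finrank_fintype_fun_eq_card]

/-- The matrices in `GL ι K` which, viewed as `F`-linear endomorphisms of `ι → K`, are `f`-primary
cyclic for some monic irreducible polynomial `f` over `F` of degree `n`. -/
def primaryCyclicSet (ι F K : Type*) [Fintype ι] [DecidableEq ι] [Field F] [Field K] [Algebra F K]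
    [FiniteDimensional F K] (n : ℕ) : Set (GL ι K) :=
  {X | ∃ f : F[X], f.Monic ∧ Irreducible f ∧ f.natDegree = n ∧
    IsPrimaryCyclic (X.1.mulVecLin.restrictScalars F) f}

variable {ι F K : Type*} [Fintype ι] [DecidableEq ι] [Field F] [Field K] [Algebra F K]
  [FiniteDimensional F K]

theorem disjoint_primaryCyclicSet {m n : ℕ} (hne : m ≠ n) (hlt : finrank F (ι → K) < m + n) :
    Disjoint (primaryCyclicSet ι F K m) (primaryCyclicSet ι F K n) := by
  rw [Set.disjoint_left]
  rintro X ⟨f, hf, hfirr, hfdeg, hfX⟩ ⟨g, hg, hgirr, hgdeg, hgX⟩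
  have hfg : f = g := eq_of_irreducible_of_dvd_of_natDegree_lt_add hf hg hfirr hgirr
    (LinearMap.charpoly_monic _).ne_zero (dvd_of_multiplicity_pos hfX.1)
    (dvd_of_multiplicity_pos hgX.1) (by rwa [LinearMap.charpoly_natDegree, hfdeg, hgdeg])
  exact hne (by rw [← hfdeg, hfg, hgdeg])

theorem ncard_biUnion_primaryCyclicSet [Finite K] {s : Finset ℕ}
    (hs : ∀ r ∈ s, Fintype.card ι < 2 * r) :
    (⋃ r ∈ s, primaryCyclicSet ι F K (finrank F K * r)).ncard =
      ∑ r ∈ s, (primaryCyclicSet ι F K (finrank F K * r)).ncard := by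
  have hb : 0 < finrank F K := finrank_pos
  have := s.finite_toSet.ncard_biUnion (s := fun r => primaryCyclicSet ι F K (finrank F K * r))
    (fun r _ => Set.toFinite _) ?_
  · rw [← finsum_mem_coe_finset]
    exact this
  intro r hr t ht hne
  refine disjoint_primaryCyclicSet (fun h => hne (Nat.eq_of_mul_eq_mul_left hb h)) ?_
  rw [finrank_pi_restrictScalars, ← mul_add]
  have := hs r hr
  have := hs t ht
  gcongr
  lia

section Extension

variable [Finite F] {L : Type*} [Field L] [Algebra F L] [Algebra K L] [IsScalarTower F K L]
  [FiniteDimensional K L]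

theorem mem_primaryCyclicSet_iff_exists_aeval_charpoly_eq_zero
    (hlt : Fintype.card ι < 2 * finrank K L) {X : GL ι K} :
    X ∈ primaryCyclicSet ι F K (finrank F L) ↔
      ∃ a : L, F⟮a⟯ = ⊤ ∧ aeval a X.1.charpoly = 0 := by
  have : FiniteDimensional F L := FiniteDimensional.trans F K L
  have isPrimaryCyclic_iff : ∀ {f : F[X]}, f.Monic → Irreducible f → f.natDegree = finrank F L →
      (IsPrimaryCyclic (X.1.mulVecLin.restrictScalars F) f ↔
        ∃ a : L, aeval a X.1.charpoly = 0 ∧ aeval a f = 0) := by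
    intro f hf hirr hdeg
    rw [isPrimaryCyclic_iff_dvd_minpoly hf,
      dvd_minpoly_restrictScalars_mulVecLin_iff X.1 hf hirr hdeg]
    rw [hdeg, finrank_pi_restrictScalars, ← finrank_mul_finrank F K L, mul_left_comm]
    exact Nat.mul_lt_mul_of_pos_left hlt finrank_pos
  simp only [Field.primitive_element_iff_minpoly_natDegree_eq]
  constructor
  · rintro ⟨f, hf, hirr, hdeg, hX⟩
    obtain ⟨a, haX, haf⟩ := (isPrimaryCyclic_iff hf hirr hdeg).1 hX
    exact ⟨a, by rw [← minpoly.eq_of_irreducible_of_monic hirr haf hf, hdeg], haX⟩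
  · rintro ⟨a, ha, haX⟩
    have hint : IsIntegral F a := Algebra.IsIntegral.isIntegral a
    exact ⟨minpoly F a, minpoly.monic hint, minpoly.irreducible hint, ha,
      (isPrimaryCyclic_iff (minpoly.monic hint) (minpoly.irreducible hint) ha).2
        ⟨a, haX, minpoly.aeval F a⟩⟩

theorem ncard_primaryCyclicSet_mul (hL : 1 < finrank K L) (hle : finrank K L ≤ Fintype.card ι)
    (hlt : Fintype.card ι < 2 * finrank K L) :
    (primaryCyclicSet ι F K (finrank F L)).ncard * (finrank K L * (Nat.card L - 1)) =
      {a : L | F⟮a⟯ = ⊤}.ncard * Nat.card (GL ι K) := by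
  have : Finite K := Module.finite_of_finite F
  have : Finite L := Module.finite_of_finite K
  have : FiniteDimensional F L := FiniteDimensional.trans F K L
  have ncard_mul : ∀ {a : L}, F⟮a⟯ = ⊤ →
      {X : GL ι K | aeval a X.1.charpoly = 0}.ncard * (Nat.card L - 1) = Nat.card (GL ι K) := by
    intro a ha
    have haK := IntermediateField.adjoin_eq_top_of_adjoin_eq_top F (E := K) ha
    exact ncard_aeval_charpoly_eq_zero_mul haK (ne_zero_of_adjoin_simple_eq_top hL haK) hle hlt
  have hcard : 0 < Nat.card L - 1 := Nat.sub_pos_of_lt Finite.one_lt_card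
  obtain ⟨a₀, ha₀⟩ := Field.exists_primitive_element F L
  have hdouble : (primaryCyclicSet ι F K (finrank F L)).ncard * finrank K L =
      {a : L | F⟮a⟯ = ⊤}.ncard * {X : GL ι K | aeval a₀ X.1.charpoly = 0}.ncard := by
    refine ncard_mul_eq_ncard_mul (fun X a => aeval a X.1.charpoly = 0) ?_ ?_
    · intro X hX
      obtain ⟨a, ha, haX⟩ := (mem_primaryCyclicSet_iff_exists_aeval_charpoly_eq_zero hlt).1 hX
      exact ncard_adjoin_eq_top_and_aeval_eq_zero X.1.charpoly_monic.ne_zero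
        (by rwa [X.1.charpoly_natDegree_eq_dim]) ha haX
    · intro a ha
      rw [← Nat.mul_left_inj hcard.ne', ncard_mul ha₀, ← ncard_mul ha]
      congr 3
      ext X
      exact and_iff_right_of_imp fun haX =>
        (mem_primaryCyclicSet_iff_exists_aeval_charpoly_eq_zero hlt).2 ⟨a, ha, haX⟩
  rw [← mul_assoc, hdouble, mul_assoc, ncard_mul ha₀]

theorem ncard_primaryCyclicSet_div (hL : 1 < finrank K L) (hle : finrank K L ≤ Fintype.card ι)
    (hlt : Fintype.card ι < 2 * finrank K L) :
    (primaryCyclicSet ι F K (finrank F L)).ncard / (Nat.card (GL ι K) : ℝ) =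
      {a : L | F⟮a⟯ = ⊤}.ncard / ((Nat.card L : ℝ) - 1) * (1 / finrank K L) := by
  have : Finite K := Module.finite_of_finite F
  have : Finite L := Module.finite_of_finite K
  have hcard : 1 < Nat.card L := Finite.one_lt_card
  have hcard' : (0 : ℝ) < Nat.card L - 1 := by simpa using hcard
  have hGL : (0 : ℝ) < Nat.card (GL ι K) := Nat.cast_pos.2 Nat.card_pos
  have key := congrArg (Nat.cast (R := ℝ)) (ncard_primaryCyclicSet_mul (F := F) hL hle hlt)
  rw [Nat.cast_mul, Nat.cast_mul, Nat.cast_mul, Nat.cast_pred (one_pos.trans hcard)] at key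
  have : (0 : ℝ) < finrank K L := Nat.cast_pos.2 finrank_pos
  rw [div_mul_div_comm, mul_one, div_eq_div_iff hGL.ne' (by positivity), ← key]
  ring

end Extension

theorem exists_field_extension_finrank_eq (K : Type*) [Field K] [Finite K] {r : ℕ} (hr : r ≠ 0) :
    ∃ (L : Type) (_ : Field L) (_ : Algebra K L), finrank K L = r := by
  obtain ⟨p, _⟩ := CharP.exists K
  have : Fact p.Prime := ⟨CharP.char_is_prime K p⟩
  have : NeZero r := ⟨hr⟩
  exact ⟨FiniteField.Extension K p r, _, _, FiniteField.finrank_extension K p r⟩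

theorem exists_ncard_primaryCyclicSet_div_eq [Finite F] {r : ℕ} (hr : 1 < r)
    (hle : r ≤ Fintype.card ι) (hlt : Fintype.card ι < 2 * r) :
    ∃ δ : ℝ, 1 - 2 / (Nat.card F : ℝ) ^ (((finrank F K * r : ℕ) : ℝ) / 2) < δ ∧ δ ≤ 1 ∧
      (primaryCyclicSet ι F K (finrank F K * r)).ncard / (Nat.card (GL ι K) : ℝ) =
        δ * (1 / r) := by
  have : Finite K := Module.finite_of_finite F
  obtain ⟨L, _, _, rfl⟩ := exists_field_extension_finrank_eq K (zero_lt_one.trans hr).ne'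
  let _ : Algebra F L := ((algebraMap K L).comp (algebraMap F K)).toAlgebra
  have : IsScalarTower F K L := IsScalarTower.of_algebraMap_eq' rfl
  have : FiniteDimensional K L := .of_finrank_pos (zero_lt_one.trans hr)
  have : FiniteDimensional F L := FiniteDimensional.trans F K L
  have htower : finrank F K * finrank K L = finrank F L := finrank_mul_finrank F K L
  rw [htower]
  exact ⟨_, one_sub_lt_ncard_adjoin_eq_top_div, ncard_adjoin_eq_top_div_le_one
    (hr.trans_le (htower ▸ Nat.le_mul_of_pos_left _ finrank_pos)),
    ncard_primaryCyclicSet_div hr hle hlt⟩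

end PrimaryCyclicSet

section HarmonicSums

theorem log_add_one_sub_log_le {x : ℝ} (hx : 0 < x) : Real.log (x + 1) - Real.log x ≤ 1 / x := by
  rw [← Real.log_div (by positivity) hx.ne']
  refine (Real.log_le_sub_one_of_pos (by positivity)).trans_eq ?_
  field_simp
  ring

theorem one_div_add_one_le_log_add_one_sub_log {x : ℝ} (hx : 0 < x) :
    1 / (x + 1) ≤ Real.log (x + 1) - Real.log x := by
  rw [← Real.log_div (by positivity) hx.ne']
  refine Eq.trans_le ?_ (Real.one_sub_inv_le_log_of_pos (by positivity))
  field_simp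
  ring

theorem log_add_one_sub_log_add_one_le_sum_Ioc {m n : ℕ} (hmn : m ≤ n) :
    Real.log (n + 1) - Real.log (m + 1) ≤ ∑ r ∈ Finset.Ioc m n, (1 : ℝ) / r := by
  induction n, hmn using Nat.le_induction with
  | base => simp
  | succ n hmn ih =>
    have := log_add_one_sub_log_le (x := n + 1) (by positivity)
    rw [Finset.sum_Ioc_succ_top hmn]
    push_cast
    linarith

theorem sum_Ioc_le_log_sub_log {m n : ℕ} (hm : 0 < m) (hmn : m ≤ n) :
    ∑ r ∈ Finset.Ioc m n, (1 : ℝ) / r ≤ Real.log n - Real.log m := by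
  induction n, hmn using Nat.le_induction with
  | base => simp
  | succ n hmn ih =>
    have := one_div_add_one_le_log_add_one_sub_log (x := n) (mod_cast hm.trans_le hmn)
    rw [Finset.sum_Ioc_succ_top hmn]
    push_cast
    linarith

theorem sum_Ioc_two_mul_le_log_two (m : ℕ) :
    ∑ r ∈ Finset.Ioc m (2 * m), (1 : ℝ) / r ≤ Real.log 2 := by
  rcases m.eq_zero_or_pos with rfl | hm
  · simpa using Real.log_nonneg one_le_two
  · refine (sum_Ioc_le_log_sub_log hm (by lia)).trans_eq ?_
    rw [Nat.cast_mul, Nat.cast_two, Real.log_mul two_ne_zero (by positivity), add_sub_cancel_right]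

theorem mem_Ioc_half_iff {c r : ℕ} : r ∈ Finset.Ioc (c / 2) c ↔ c < 2 * r ∧ r ≤ c := by
  rw [Finset.mem_Ioc]
  lia

theorem log_two_sub_le_sum_Ioc_half (c : ℕ) :
    Real.log 2 - 1 / ((c : ℝ) + 1) ≤ ∑ r ∈ Finset.Ioc (c / 2) c, (1 : ℝ) / r := by
  refine le_trans ?_ (log_add_one_sub_log_add_one_le_sum_Ioc (Nat.div_le_self c 2))
  have hhalf : Real.log ((c / 2 : ℕ) + 1) ≤ Real.log (c + 1 + 1) - Real.log 2 := by
    rw [← Real.log_div (by positivity) two_ne_zero]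
    refine Real.log_le_log (by positivity) ?_
    have : ((c / 2 : ℕ) : ℝ) ≤ c / 2 := Nat.cast_div_le
    linarith
  have := log_add_one_sub_log_le (x := c + 1) (by positivity)
  linarith

theorem sum_Ioc_half_le_log_two_add (c : ℕ) :
    ∑ r ∈ Finset.Ioc (c / 2) c, (1 : ℝ) / r ≤ Real.log 2 + 1 / c := by
  obtain ⟨m, rfl | rfl⟩ := c.even_or_odd'
  · rw [Nat.mul_div_cancel_left m two_pos]
    exact (sum_Ioc_two_mul_le_log_two m).trans (le_add_of_nonneg_right (by positivity))
  · rw [show (2 * m + 1) / 2 = m by lia, Finset.sum_Ioc_succ_top (by lia)]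
    gcongr
    exact sum_Ioc_two_mul_le_log_two m

theorem sum_Ioc_half_le_one (c : ℕ) : ∑ r ∈ Finset.Ioc (c / 2) c, (1 : ℝ) / r ≤ 1 := by
  calc ∑ r ∈ Finset.Ioc (c / 2) c, (1 : ℝ) / r
      ≤ (Finset.Ioc (c / 2) c).card • (1 / ((c / 2 : ℕ) + 1 : ℝ)) := by
        refine Finset.sum_le_card_nsmul _ _ _ fun r hr => ?_
        gcongr
        exact_mod_cast (Finset.mem_Ioc.1 hr).1
    _ ≤ 1 := by
        rw [Nat.card_Ioc, nsmul_eq_mul, mul_one_div, div_le_one (by positivity)]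
        exact_mod_cast (by lia : c - c / 2 ≤ c / 2 + 1)

end HarmonicSums

section Proportions

variable {ι F K : Type*} [Fintype ι] [DecidableEq ι] [Field F] [Finite F] [Field K] [Algebra F K]
  [FiniteDimensional F K] {r : ℕ}

theorem ncard_primaryCyclicSet_div_le (hr : 1 < r) (hle : r ≤ Fintype.card ι)
    (hlt : Fintype.card ι < 2 * r) :
    (primaryCyclicSet ι F K (finrank F K * r)).ncard / (Nat.card (GL ι K) : ℝ) ≤ 1 / r := by
  obtain ⟨δ, -, hδ, heq⟩ := exists_ncard_primaryCyclicSet_div_eq (F := F) (K := K) hr hle hlt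
  rw [heq]
  exact mul_le_of_le_one_left (by positivity) hδ

theorem one_sub_mul_lt_ncard_primaryCyclicSet_div (hr : 1 < r) (hle : r ≤ Fintype.card ι)
    (hlt : Fintype.card ι < 2 * r) :
    (1 - 2 / (Nat.card F : ℝ) ^ (((finrank F K * Fintype.card ι : ℕ) : ℝ) / 4)) * (1 / r) <
      (primaryCyclicSet ι F K (finrank F K * r)).ncard / (Nat.card (GL ι K) : ℝ) := by
  obtain ⟨δ, hδ, -, heq⟩ := exists_ncard_primaryCyclicSet_div_eq (F := F) (K := K) hr hle hlt
  rw [heq]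
  have : (0 : ℝ) < r := mod_cast one_pos.trans hr
  have hF : (1 : ℝ) < Nat.card F := mod_cast Finite.one_lt_card
  refine mul_lt_mul_of_pos_right (lt_of_le_of_lt ?_ hδ) (by positivity)
  gcongr 1 - 2 / (Nat.card F : ℝ) ^ ?_
  · exact hF.le
  · have : ((finrank F K * Fintype.card ι : ℕ) : ℝ) ≤ 2 * (finrank F K * r : ℕ) := by
      exact_mod_cast (Nat.mul_le_mul_left _ hlt.le).trans_eq (Nat.mul_left_comm _ _ _)
    linarith

variable {s : Finset ℕ}

theorem ncard_biUnion_primaryCyclicSet_div (hlt : ∀ r ∈ s, Fintype.card ι < 2 * r) :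
    (⋃ r ∈ s, primaryCyclicSet ι F K (finrank F K * r)).ncard / (Nat.card (GL ι K) : ℝ) =
      ∑ r ∈ s,
        (primaryCyclicSet ι F K (finrank F K * r)).ncard / (Nat.card (GL ι K) : ℝ) := by
  have : Finite K := Module.finite_of_finite F
  rw [ncard_biUnion_primaryCyclicSet hlt, Nat.cast_sum, Finset.sum_div]

theorem ncard_biUnion_primaryCyclicSet_div_le_sum (hr : ∀ r ∈ s, 1 < r)
    (hle : ∀ r ∈ s, r ≤ Fintype.card ι) (hlt : ∀ r ∈ s, Fintype.card ι < 2 * r) :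
    (⋃ r ∈ s, primaryCyclicSet ι F K (finrank F K * r)).ncard / (Nat.card (GL ι K) : ℝ) ≤
      ∑ r ∈ s, (1 : ℝ) / r := by
  rw [ncard_biUnion_primaryCyclicSet_div hlt]
  exact Finset.sum_le_sum fun r hrs =>
    ncard_primaryCyclicSet_div_le (hr r hrs) (hle r hrs) (hlt r hrs)

theorem one_sub_mul_sum_lt_ncard_biUnion_primaryCyclicSet_div (hs : s.Nonempty)
    (hr : ∀ r ∈ s, 1 < r) (hle : ∀ r ∈ s, r ≤ Fintype.card ι)
    (hlt : ∀ r ∈ s, Fintype.card ι < 2 * r) :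
    (1 - 2 / (Nat.card F : ℝ) ^ (((finrank F K * Fintype.card ι : ℕ) : ℝ) / 4)) *
        ∑ r ∈ s, (1 : ℝ) / r <
      (⋃ r ∈ s, primaryCyclicSet ι F K (finrank F K * r)).ncard / (Nat.card (GL ι K) : ℝ) := by
  rw [ncard_biUnion_primaryCyclicSet_div hlt, Finset.mul_sum]
  exact Finset.sum_lt_sum_of_nonempty hs fun r hrs =>
    one_sub_mul_lt_ncard_primaryCyclicSet_div (hr r hrs) (hle r hrs) (hlt r hrs)

end Proportions

theorem stmt18 (q b c : ℕ) (hq : IsPrimePow q) (hb : 1 ≤ b) (hc : 2 ≤ c)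
    (F K : Type*) [Field F] [Fintype F] (hF : Fintype.card F = q)
    [Field K] [Algebra F K] [FiniteDimensional F K] (hK : Module.finrank F K = b)
    (N : Set (GL (Fin c) K))
    (hN : N = {A : GL (Fin c) K | ∃ r : ℕ, c < 2 * r ∧ r ≤ c ∧ ∃ f : Polynomial F,
      f.Monic ∧ Irreducible f ∧ f.natDegree = b * r ∧
      IsPrimaryCyclic (((↑A : Matrix (Fin c) (Fin c) K).mulVecLin).restrictScalars F) f}) :
    Real.log 2 - 1 / ((c : ℝ) + 1) - 2 / (q : ℝ) ^ (((b * c : ℕ) : ℝ) / 4) <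
      (Nat.card N : ℝ) / Nat.card (GL (Fin c) K) ∧
    (Nat.card N : ℝ) / Nat.card (GL (Fin c) K) ≤ Real.log 2 + 1 / (c : ℝ) := by
  subst hF hK
  have one_lt : ∀ r ∈ Finset.Ioc (c / 2) c, 1 < r := fun r hr => by
    have := mem_Ioc_half_iff.1 hr
    lia
  have le_card : ∀ r ∈ Finset.Ioc (c / 2) c, r ≤ Fintype.card (Fin c) :=
    fun r hr => by simpa using (mem_Ioc_half_iff.1 hr).2
  have card_lt : ∀ r ∈ Finset.Ioc (c / 2) c, Fintype.card (Fin c) < 2 * r :=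
    fun r hr => by simpa using (mem_Ioc_half_iff.1 hr).1
  have hN_union : N = ⋃ r ∈ Finset.Ioc (c / 2) c,
      primaryCyclicSet (Fin c) F K (finrank F K * r) := by
    ext X
    simp only [hN, Set.mem_iUnion₂, mem_Ioc_half_iff, exists_prop, and_assoc]
    rfl
  rw [hN_union, Nat.card_coe_set_eq]
  constructor
  · refine lt_of_le_of_lt ?_ (one_sub_mul_sum_lt_ncard_biUnion_primaryCyclicSet_div
      ⟨c, mem_Ioc_half_iff.2 (by lia)⟩ one_lt le_card card_lt)
    rw [Nat.card_eq_fintype_card, Fintype.card_fin, sub_mul, one_mul]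
    gcongr
    · exact log_two_sub_le_sum_Ioc_half c
    · exact mul_le_of_le_one_right (by positivity) (sum_Ioc_half_le_one c)
  · exact (ncard_biUnion_primaryCyclicSet_div_le_sum one_lt le_card card_lt).trans
      (sum_Ioc_half_le_log_two_add c)
end
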